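/- arXiv:2012.11675 — 2 statements merged into one kernel-verified Lean document; each statement's English description precedes it below -/
import Mathlib

section
/- There exists an absolute constant C with the following property. Fix Δ ∈ (−∞,−1)∪(−1,1), with the associated ζ and functions ξ, K, ϑ, ρ(·|q). Let k be the smallest odd positive integer with 2πk/(k+1) > |2π − 4ζ| if −1 < Δ < 1, and with 2πk/(k+1) > sup_{λ∈ℝ} |2ϑ(λ) − ϑ(λ+π/2) − ϑ(λ−π/2)| if Δ < −1. Then there exists N₀ (possibly depending on Δ) such that for every even N ≥ N₀, every n ≤ N/2 − Ck²·𝟙_{−1<Δ<0}, every 𝔮 with ∫_{−𝔮}^{𝔮} ρ(λ|𝔮)dλ = n/N, and every (k,𝔮)-interlaced, strictly ordered, symmetric λ ∈ ℝⁿ, the n×n matrix J with entries J_{ii} = ξ(λ_i) − (1/N)·Σ_{ℓ≠i} K(λ_i−λ_ℓ) and J_{ij} = (1/N)·K(λ_i−λ_j) for i ≠ j is invertible. -/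
open MeasureTheory Filter
open scoped Real BigOperators

noncomputable section

namespace BetheSix

/-! ### Kernels in the regime `-1 < Δ < 1` (`Δ = -cos ζ`, `ζ ∈ (0,π)`) -/

def Kml (ζ x : ℝ) : ℝ := Real.sin (2 * ζ) / (2 * π * (Real.sinh x ^ 2 + Real.sin ζ ^ 2))

def xiMl (ζ x : ℝ) : ℝ := Real.sin ζ / (2 * π * (Real.sinh x ^ 2 + Real.sin (ζ / 2) ^ 2))

/-- the momentum `p(x) = 2π ∫₀ˣ ξ`. -/
def pMl (ζ x : ℝ) : ℝ := 2 * π * ∫ t in (0 : ℝ)..x, xiMl ζ t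

/-- the phase `ϑ(x) = 2π ∫₀ˣ K`. -/
def thMl (ζ x : ℝ) : ℝ := 2 * π * ∫ t in (0 : ℝ)..x, Kml ζ t

/-- the explicit density `ρ(x) = ρ(x|∞) = 1/(2ζ cosh(πx/ζ))`. -/
def rhoInf (ζ x : ℝ) : ℝ := 1 / (2 * ζ * Real.cosh (π * x / ζ))

/-- `g` is the solution `ρ(·|q)` of the continuum Bethe equation in the regime
`-1 < Δ < 1`: `g ∈ L¹(ℝ) ∩ L^∞(ℝ)` and `g(λ) + ∫_{-q}^q K(λ-μ) g(μ) dμ = ξ(λ)`. -/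
def IsBEml (ζ q : ℝ) (g : ℝ → ℝ) : Prop :=
  Integrable g ∧ MemLp g ⊤ ∧
    ∀ l : ℝ, g l + ∫ m in (-q)..q, Kml ζ (l - m) * g m = xiMl ζ l

/-! ### Kernels in the regime `Δ < -1` (`Δ = -cosh ζ`, `ζ > 0`) -/

def Kms (ζ x : ℝ) : ℝ := Real.sinh (2 * ζ) / (2 * π * (Real.sin x ^ 2 + Real.sinh ζ ^ 2))

def xiMs (ζ x : ℝ) : ℝ := Real.sinh ζ / (2 * π * (Real.sin x ^ 2 + Real.sinh (ζ / 2) ^ 2))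

def pMs (ζ x : ℝ) : ℝ := 2 * π * ∫ t in (0 : ℝ)..x, xiMs ζ t

def thMs (ζ x : ℝ) : ℝ := 2 * π * ∫ t in (0 : ℝ)..x, Kms ζ t

/-- the explicit `π`-periodic density `ρ(x) = (1/(2ζ)) Σ_{n∈ℤ} 1/cosh(π(πn-x)/ζ)`. -/
def rhoMs (ζ x : ℝ) : ℝ := (1 / (2 * ζ)) * ∑' n : ℤ, 1 / Real.cosh (π * (π * n - x) / ζ)

/-- `g` is the continuous solution `ρ(·|q)` of the continuum Bethe equation in the
regime `Δ < -1`. -/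
def IsBEms (ζ q : ℝ) (g : ℝ → ℝ) : Prop :=
  Continuous g ∧
    ∀ l : ℝ, g l + ∫ m in (-q)..q, Kms ζ (l - m) * g m = xiMs ζ l

/-- In the regime `-1 < Δ < 1` the parameter `𝔮` ranges over `[0,∞]`.  The pair
`(S, g)` encodes the interval `[-𝔮, 𝔮]` together with the density `ρ(·|𝔮)`:
either `𝔮 = q` is finite, `S = [-q,q]` and `g = ρ(·|q)` solves the continuum Bethe
equation, or `𝔮 = ∞`, `S = ℝ` and `g = ρ(·|∞)` is the explicit density. -/
def QDomainMl (ζ : ℝ) (S : Set ℝ) (g : ℝ → ℝ) : Prop :=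
  (∃ q : ℝ, 0 ≤ q ∧ S = Set.Icc (-q) q ∧ IsBEml ζ q g) ∨
  (S = Set.univ ∧ g = rhoInf ζ)

/-! ### The logarithmic Bethe equations -/

/-- `lam` solves the logarithmic Bethe equations
`(N/2π) p(λᵢ) - (1/2π) Σⱼ ϑ(λᵢ - λⱼ) = Iᵢ` with `Iᵢ = i - (n+1)/2` (`i` is 1-based). -/
def BetheEq (p th : ℝ → ℝ) (N n : ℕ) (lam : Fin n → ℝ) : Prop :=
  ∀ i : Fin n,
    ((N : ℝ) / (2 * π)) * p (lam i) - (1 / (2 * π)) * ∑ j, th (lam i - lam j)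
      = ((i.1 : ℝ) + 1) - ((n : ℝ) + 1) / 2

/-- `λ_{n+1-i} = -λ_i` for all `i` (1-based indices). -/
def SymmetricVec {n : ℕ} (lam : Fin n → ℝ) : Prop :=
  ∀ i : Fin n, lam ⟨n - 1 - i.1, by have := i.2; omega⟩ = -lam i

/-- `λ₁ < λ₂ < ⋯ < λ_n`. -/
def StrictOrderedVec {n : ℕ} (lam : Fin n → ℝ) : Prop :=
  ∀ i j : Fin n, i < j → lam i < lam j

/-- the cumulative function `G(y) = ∫₀^y g`. Since the densities `ρ(·|q)` are
positive, `G` is strictly increasing, and the quantile `Λ(x|q)` (with the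
conventions `Λ(x|q) = ±∞` outside the range) satisfies, for every `y ∈ ℝ`:
`Λ(x|q) ≤ y ↔ (x-(n+1)/2)/N ≤ G(y)` and `y ≤ Λ(x|q) ↔ G(y) ≤ (x-(n+1)/2)/N`. -/
def GG (g : ℝ → ℝ) (y : ℝ) : ℝ := ∫ t in (0 : ℝ)..y, g t

/-- `lam` is `(k,q)`-interlaced with respect to the density `g = ρ(·|q)`:
`Λ(i - k/2 | q) ≤ λ_i ≤ Λ(i + k/2 | q)` for all `i` (1-based), expressed through
the cumulative function `G` to accommodate the conventions `Λ = ±∞`. -/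
def Interlaced (N n k : ℕ) (g : ℝ → ℝ) (lam : Fin n → ℝ) : Prop :=
  ∀ i : Fin n,
    (((i.1 : ℝ) + 1) - (k : ℝ) / 2 - ((n : ℝ) + 1) / 2) / N ≤ GG g (lam i) ∧
    GG g (lam i) ≤ (((i.1 : ℝ) + 1) + (k : ℝ) / 2 - ((n : ℝ) + 1) / 2) / N

end BetheSix

namespace BetheSix

/-- the Jacobian `dT` of the map encoding the logarithmic Bethe equations:
`J_{ii} = ξ(λᵢ) - (1/N) Σ_{ℓ≠i} K(λᵢ-λ_ℓ)` and `J_{ij} = (1/N) K(λᵢ-λⱼ)` for `i ≠ j`. -/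
def Jac (xi K : ℝ → ℝ) (N n : ℕ) (lam : Fin n → ℝ) : Matrix (Fin n) (Fin n) ℝ :=
  Matrix.of fun i j =>
    if i = j then xi (lam i) - (1 / (N : ℝ)) * ∑ l ∈ Finset.univ.erase i, K (lam i - lam l)
    else (1 / (N : ℝ)) * K (lam i - lam j)

/-- `φ(λ) = 2ϑ(λ) - ϑ(λ+π/2) - ϑ(λ-π/2)` in the regime `Δ < -1`. -/
def phiMs (ζ l : ℝ) : ℝ := 2 * thMs ζ l - thMs ζ (l + π / 2) - thMs ζ (l - π / 2)

/-!
Write `J = D + N⁻¹ (K(λᵢ - λⱼ))ᵢⱼ` with `D` diagonal, `Dᵢᵢ = ξ(λᵢ) - N⁻¹ ∑ₗ K(λᵢ - λₗ)`. For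
`Δ < -1` and `-1 < Δ < 0` the kernel `K` has positive Fourier coefficients, so the second matrix
is positive semidefinite and it is enough that `D` is positive. Interlacing makes
`N⁻¹ ∑ₗ K(λᵢ - λₗ)` a Riemann sum, equal up to `O(k / N)` to
`∫ K(λᵢ - t) ρ(t|q) dt = ξ(λᵢ) - ρ(λᵢ|q)` over `[-q, q]`, so that `Dᵢᵢ ≥ ρ(λᵢ|q) - O(k / N)`.
Finally `ρ(·|q)` dominates the explicit density `ρ`: inverting `1 + K` in Fourier space turns the
equation for `ρ(·|q)` into `ρ(·|q) = ρ + Q * (ρ(·|q) 1_{|·| > q})` with a positive kernel `Q`. For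
`Δ < -1` the density `ρ` is bounded below; for `-1 < Δ < 0` it is comparable with its own tails,
and the tail beyond `λᵢ` has mass at least of order `k² / N` because `n ≤ N / 2 - C k²`. For
`0 ≤ Δ < 1` one has `K ≤ 0 < ξ`, and `J` is strictly diagonally dominant.
-/

/-! ### Partial fractions of the cotangent -/

lemma tendsto_one_div_add_natCast (z : ℂ) :
    Tendsto (fun n : ℕ => 1 / (z + n)) atTop (nhds 0) := by
  simp only [one_div]
  refine tendsto_inv₀_cobounded.comp ?_
  exact (tendsto_const_add_cobounded z).comp tendsto_natCast_atTop_cobounded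

lemma tendsto_sum_range_pi_mul_cot {z : ℂ} (hz : z ∈ Complex.integerComplement) :
    Tendsto (fun n : ℕ => ∑ j ∈ Finset.range n, (1 / (z + j) + 1 / (z - (j + 1)))) atTop
      (nhds (π * Complex.cot (π * z))) := by
  have h := ((tendsto_logDeriv_euler_cot_sub hz).add_const (1 / z)).sub
    (tendsto_one_div_add_natCast z)
  rw [sub_add_cancel, sub_zero] at h
  refine h.congr fun n => ?_
  induction n with
  | zero => simp
  | succ n ih =>
    rw [Finset.sum_range_succ, Finset.sum_range_succ, ← ih, cotTerm]
    push_cast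
    ring

lemma cot_add_cot {u v : ℂ} (hu : Complex.sin u ≠ 0) (hv : Complex.sin v ≠ 0) :
    Complex.cot u + Complex.cot v
      = 2 * Complex.sin (u + v) / (Complex.cos (u - v) - Complex.cos (u + v)) := by
  have hprod : Complex.cos (u - v) - Complex.cos (u + v)
      = 2 * (Complex.sin u * Complex.sin v) := by
    rw [Complex.cos_sub, Complex.cos_add]
    ring
  rw [hprod, Complex.sin_add, Complex.cot, Complex.cot]
  field_simp
  ring

lemma ofReal_add_mul_I_mem_integerComplement {a : ℝ} (ha : 0 < a) (ha' : a < 1) (y : ℝ) :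
    (a + y * Complex.I : ℂ) ∈ Complex.integerComplement := by
  rw [Complex.mem_integerComplement_iff]
  rintro ⟨k, hk⟩
  have hre : (k : ℝ) = a := by simpa using congrArg Complex.re hk
  have h0 : (0 : ℤ) < k := by rw [← hre] at ha; exact_mod_cast ha
  have h1 : k < (1 : ℤ) := by rw [← hre] at ha'; exact_mod_cast ha'
  omega

/-! ### The Fourier pair `sinh (α w) / sinh (β w)` -/

/-- The multiplier `w ↦ sinh (α w) / sinh (β w)`, extended continuously to `w = 0`. -/
def sinhQuot (α β w : ℝ) : ℝ := if w = 0 then α / β else Real.sinh (α * w) / Real.sinh (β * w)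

/-- The kernel on `ℝ` whose Fourier transform is `sinhQuot α β` (for `0 < α < β`); every kernel
and density of the regime `-1 < Δ < 1` is of this form. -/
def sinhQuotKernel (α β x : ℝ) : ℝ :=
  1 / (2 * β) * (Real.sin (π * α / β) / (Real.cosh (π * x / β) + Real.cos (π * α / β)))

section SinhQuot

variable {α β : ℝ}

lemma sinhQuot_neg (w : ℝ) : sinhQuot α β (-w) = sinhQuot α β w := by
  simp [sinhQuot, Real.sinh_neg, neg_div_neg_eq]

lemma sinhQuot_abs (w : ℝ) : sinhQuot α β |w| = sinhQuot α β w := by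
  rcases abs_choice w with h | h <;> rw [h]
  exact sinhQuot_neg w

lemma sinhQuotKernel_neg (x : ℝ) : sinhQuotKernel α β (-x) = sinhQuotKernel α β x := by
  rw [sinhQuotKernel, sinhQuotKernel, mul_neg, neg_div, Real.cosh_neg]

lemma integrable_exp_neg_mul_abs {c : ℝ} (hc : 0 < c) :
    Integrable fun x : ℝ => Real.exp (-c * |x|) := by
  rw [← integrableOn_univ, ← Set.Iic_union_Ioi (a := (0 : ℝ))]
  refine IntegrableOn.union ?_ ?_
  · refine (integrableOn_exp_mul_Iic hc 0).congr_fun (fun x hx => ?_) measurableSet_Iic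
    rw [abs_of_nonpos hx, mul_neg, neg_mul, neg_neg]
  · refine (integrableOn_exp_mul_Ioi (neg_lt_zero.2 hc) 0).congr_fun (fun x hx => ?_)
      measurableSet_Ioi
    rw [abs_of_pos hx]

lemma integral_exp_neg_mul_abs_mul_exp {c : ℝ} (hc : 0 < c) (x : ℝ) :
    ∫ w : ℝ, (Real.exp (-c * |w|) : ℂ) * Complex.exp (x * Complex.I * w)
      = 1 / (c + x * Complex.I) + 1 / (c - x * Complex.I) := by
  have hleft : ∀ w ∈ Set.Iic (0 : ℝ), (Real.exp (-c * |w|) : ℂ) * Complex.exp (x * Complex.I * w)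
      = Complex.exp ((c + x * Complex.I) * w) := fun w hw => by
    rw [abs_of_nonpos hw, Complex.ofReal_exp, ← Complex.exp_add]
    push_cast
    ring_nf
  have hright : ∀ w ∈ Set.Ioi (0 : ℝ), (Real.exp (-c * |w|) : ℂ) * Complex.exp (x * Complex.I * w)
      = Complex.exp (-(c - x * Complex.I) * w) := fun w hw => by
    rw [abs_of_pos hw, Complex.ofReal_exp, ← Complex.exp_add]
    push_cast
    ring_nf
  have hre : 0 < (c + x * Complex.I).re := by simpa using hc
  have hre' : (-(c - x * Complex.I)).re < 0 := by simpa using hc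
  rw [← intervalIntegral.integral_Iic_add_Ioi (b := 0)
      ((integrableOn_exp_mul_complex_Iic hre 0).congr_fun (fun w hw => (hleft w hw).symm)
        measurableSet_Iic)
      ((integrableOn_exp_mul_complex_Ioi hre' 0).congr_fun (fun w hw => (hright w hw).symm)
        measurableSet_Ioi),
    setIntegral_congr_fun measurableSet_Iic hleft, setIntegral_congr_fun measurableSet_Ioi hright,
    integral_exp_mul_complex_Iic hre, integral_exp_mul_complex_Ioi hre']
  simp only [Complex.ofReal_zero, mul_zero, Complex.exp_zero, neg_div_neg_eq]

lemma dslope_sinh_const_mul (c w : ℝ) :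
    dslope (fun w => Real.sinh (c * w)) 0 w = if w = 0 then c else Real.sinh (c * w) / w := by
  split_ifs with hw
  · simpa [hw] using (((hasDerivAt_id (0 : ℝ)).const_mul c).sinh).deriv
  · simp [dslope_of_ne _ hw, slope_def_field]

lemma continuous_dslope_sinh_const_mul (c : ℝ) :
    Continuous (dslope (fun w => Real.sinh (c * w)) 0) := by
  rw [← continuousOn_univ, continuousOn_dslope univ_mem]
  exact ⟨by fun_prop, by fun_prop⟩

lemma continuous_sinhQuot (hβ : β ≠ 0) : Continuous (sinhQuot α β) := by
  have h : sinhQuot α β = fun w => dslope (fun w => Real.sinh (α * w)) 0 w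
      / dslope (fun w => Real.sinh (β * w)) 0 w := by
    funext w
    rw [dslope_sinh_const_mul, dslope_sinh_const_mul, sinhQuot]
    split_ifs with hw
    · rfl
    · rw [div_div_div_cancel_right₀ hw]
  rw [h]
  refine (continuous_dslope_sinh_const_mul α).div (continuous_dslope_sinh_const_mul β) fun w => ?_
  rw [dslope_sinh_const_mul]
  split_ifs with hw
  · exact hβ
  · exact div_ne_zero (Real.sinh_ne_zero.2 (mul_ne_zero hβ hw)) hw

lemma sinhQuot_pos (hα : 0 < α) (hβ : 0 < β) (w : ℝ) : 0 < sinhQuot α β w := by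
  rw [← sinhQuot_abs, sinhQuot]
  split_ifs with hw
  · positivity
  · have : 0 < |w| := (abs_nonneg w).lt_of_ne' hw
    exact div_pos (Real.sinh_pos_iff.2 (by positivity)) (Real.sinh_pos_iff.2 (by positivity))

lemma sinhQuot_le_exp (hα : 0 < α) (hαβ : α < β) (w : ℝ) :
    sinhQuot α β w ≤ Real.exp (-(β - α) * |w|) := by
  have hβ : 0 < β := hα.trans hαβ
  rw [← sinhQuot_abs, sinhQuot]
  split_ifs with hw
  · rw [hw, mul_zero, Real.exp_zero, div_le_one hβ]
    exact hαβ.le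
  · have hw' : 0 < |w| := (abs_nonneg w).lt_of_ne' hw
    rw [div_le_iff₀ (Real.sinh_pos_iff.2 (by positivity)), Real.sinh_eq, Real.sinh_eq,
      mul_div_assoc', mul_sub, ← Real.exp_add, ← Real.exp_add,
      show -(β - α) * |w| + β * |w| = α * |w| by ring]
    have : Real.exp (-(β - α) * |w| + -(β * |w|)) ≤ Real.exp (-(α * |w|)) :=
      Real.exp_le_exp.2 (by nlinarith)
    linarith

lemma integrable_sinhQuot (hα : 0 < α) (hαβ : α < β) : Integrable (sinhQuot α β) := by
  have hβ : 0 < β := hα.trans hαβ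
  refine (integrable_exp_neg_mul_abs (sub_pos.2 hαβ)).mono'
    (continuous_sinhQuot hβ.ne').aestronglyMeasurable (ae_of_all _ fun w => ?_)
  rw [Real.norm_of_nonneg (sinhQuot_pos hα hβ w).le]
  exact sinhQuot_le_exp hα hαβ w

lemma hasSum_exp_sub_exp_sinhQuot (hβ : 0 < β) {w : ℝ} (hw : w ≠ 0) :
    HasSum (fun j : ℕ => Real.exp (-((2 * j + 1) * β - α) * |w|)
      - Real.exp (-((2 * j + 1) * β + α) * |w|)) (sinhQuot α β w) := by
  have hw' : 0 < |w| := abs_pos.2 hw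
  rw [← sinhQuot_abs]
  generalize |w| = t at hw'
  have hlt : Real.exp (-(2 * β) * t) < 1 := Real.exp_lt_one_iff.2 (by
    nlinarith [mul_pos hβ hw'])
  have h := (hasSum_geometric_of_lt_one (Real.exp_pos _).le hlt).mul_left
    (Real.exp (-(β - α) * t) - Real.exp (-(β + α) * t))
  have hval : (Real.exp (-(β - α) * t) - Real.exp (-(β + α) * t))
      * (1 - Real.exp (-(2 * β) * t))⁻¹ = sinhQuot α β t := by
    have hs : 0 < Real.sinh (β * t) := Real.sinh_pos_iff.2 (by positivity)
    rw [sinhQuot, if_neg hw'.ne', ← div_eq_mul_inv, div_eq_div_iff (by linarith) hs.ne',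
      Real.sinh_eq, Real.sinh_eq]
    simp only [sub_mul, mul_sub, mul_one, div_mul_eq_mul_div, mul_div_assoc', ← Real.exp_add]
    ring_nf
  rw [hval] at h
  refine h.congr_fun fun j => ?_
  rw [← Real.exp_nat_mul, sub_mul, ← Real.exp_add, ← Real.exp_add]
  congr 2 <;> ring

/-! ### Fourier inversion for `sinhQuotKernel` -/

lemma pi_mul_cot_add_cot_eq_sinhQuotKernel (hβ : β ≠ 0) {a x y : ℝ} (ha : a = (β - α) / (2 * β))
    (hy : y = x / (2 * β)) (hz : (a + y * Complex.I : ℂ) ∈ Complex.integerComplement)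
    (hz' : (a + (-y : ℝ) * Complex.I : ℂ) ∈ Complex.integerComplement) :
    (1 / (2 * β) : ℂ) * (π * Complex.cot (π * (a + y * Complex.I))
      + π * Complex.cot (π * (a + (-y : ℝ) * Complex.I)))
      = ((2 * π * sinhQuotKernel α β x : ℝ) : ℂ) := by
  have hβc : (β : ℂ) ≠ 0 := by exact_mod_cast hβ
  have hadd : (π * (a + y * Complex.I) + π * (a + (-y : ℝ) * Complex.I) : ℂ)
      = (π - (π * α / β : ℝ) : ℂ) := by
    rw [ha]; push_cast; field_simp; ring
  have hsub : (π * (a + y * Complex.I) - π * (a + (-y : ℝ) * Complex.I) : ℂ)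
      = (π * x / β : ℝ) * Complex.I := by
    rw [hy]; push_cast; field_simp; ring
  rw [← mul_add, cot_add_cot (sin_pi_mul_ne_zero hz) (sin_pi_mul_ne_zero hz'), hadd, hsub,
    Complex.sin_pi_sub, Complex.cos_pi_sub, Complex.cos_mul_I, sinhQuotKernel, sub_neg_eq_add]
  push_cast
  ring

lemma tendsto_sum_range_sinhQuotKernel (hα : 0 < α) (hαβ : α < β) (x : ℝ) :
    Tendsto (fun n : ℕ => ∑ j ∈ Finset.range n,
      ((1 / (((2 * j + 1) * β - α : ℝ) + x * Complex.I)
          + 1 / (((2 * j + 1) * β - α : ℝ) - x * Complex.I))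
        - (1 / (((2 * j + 1) * β + α : ℝ) + x * Complex.I)
          + 1 / (((2 * j + 1) * β + α : ℝ) - x * Complex.I))))
      atTop (nhds ((2 * π * sinhQuotKernel α β x : ℝ) : ℂ)) := by
  have hβ : 0 < β := hα.trans hαβ
  have hβc : (β : ℂ) ≠ 0 := by exact_mod_cast hβ.ne'
  obtain ⟨a, ha⟩ : ∃ a : ℝ, a = (β - α) / (2 * β) := ⟨_, rfl⟩
  obtain ⟨y, hy⟩ : ∃ y : ℝ, y = x / (2 * β) := ⟨_, rfl⟩
  have ha0 : 0 < a := ha ▸ div_pos (by linarith) (by linarith)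
  have ha1 : a < 1 := by rw [ha, div_lt_one (by linarith)]; linarith
  have hz := ofReal_add_mul_I_mem_integerComplement ha0 ha1 y
  have hz' := ofReal_add_mul_I_mem_integerComplement ha0 ha1 (-y)
  have h := ((tendsto_sum_range_pi_mul_cot hz).add
    (tendsto_sum_range_pi_mul_cot hz')).const_mul (1 / (2 * β) : ℂ)
  rw [pi_mul_cot_add_cot_eq_sinhQuotKernel hβ.ne' ha hy hz hz'] at h
  refine h.congr fun n => ?_
  rw [← Finset.sum_add_distrib, Finset.mul_sum]
  refine Finset.sum_congr rfl fun j _ => ?_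
  rw [show (((2 * j + 1) * β - α : ℝ) + x * Complex.I : ℂ)
      = 2 * β * (a + y * Complex.I + j) by rw [ha, hy]; push_cast; field_simp; ring,
    show (((2 * j + 1) * β - α : ℝ) - x * Complex.I : ℂ)
      = 2 * β * (a + (-y : ℝ) * Complex.I + j) by rw [ha, hy]; push_cast; field_simp; ring,
    show (((2 * j + 1) * β + α : ℝ) + x * Complex.I : ℂ)
      = 2 * β * -(a + (-y : ℝ) * Complex.I - (j + 1)) by
        rw [ha, hy]; push_cast; field_simp; ring,
    show (((2 * j + 1) * β + α : ℝ) - x * Complex.I : ℂ)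
      = 2 * β * -(a + y * Complex.I - (j + 1)) by rw [ha, hy]; push_cast; field_simp; ring]
  simp only [one_div, mul_inv, inv_neg]
  ring

lemma norm_exp_ofReal_mul_I_mul_ofReal (x w : ℝ) : ‖Complex.exp (x * Complex.I * w)‖ = 1 := by
  rw [mul_right_comm, ← Complex.ofReal_mul, Complex.norm_exp_ofReal_mul_I]

lemma hasSum_integral_sinhQuot_mul_exp (hα : 0 < α) (hαβ : α < β) (x : ℝ) :
    HasSum (fun j : ℕ => ∫ w : ℝ, ((Real.exp (-((2 * j + 1) * β - α) * |w|)
      - Real.exp (-((2 * j + 1) * β + α) * |w|) : ℝ) : ℂ) * Complex.exp (x * Complex.I * w))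
      (∫ w : ℝ, (sinhQuot α β w : ℂ) * Complex.exp (x * Complex.I * w)) := by
  have hβ : 0 < β := hα.trans hαβ
  have hne : ∀ᵐ w : ℝ, w ≠ 0 := by simp [ae_iff]
  refine hasSum_integral_of_dominated_convergence
    (fun j w => Real.exp (-((2 * j + 1) * β - α) * |w|) - Real.exp (-((2 * j + 1) * β + α) * |w|))
    (fun j => Continuous.aestronglyMeasurable (by fun_prop)) (fun j => ae_of_all _ fun w => ?_)
    (hne.mono fun w hw => (hasSum_exp_sub_exp_sinhQuot hβ hw).summable)
    ((integrable_sinhQuot hα hαβ).congr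
      (hne.mono fun w hw => (hasSum_exp_sub_exp_sinhQuot hβ hw).tsum_eq.symm))
    (hne.mono fun w hw => (Complex.hasSum_ofReal.2 (hasSum_exp_sub_exp_sinhQuot hβ hw)).mul_right _)
  rw [norm_mul, norm_exp_ofReal_mul_I_mul_ofReal, mul_one, Complex.norm_real,
    Real.norm_of_nonneg (sub_nonneg.2 (Real.exp_le_exp.2 ?_))]
  nlinarith [abs_nonneg w]

lemma integral_sinhQuot_mul_exp (hα : 0 < α) (hαβ : α < β) (x : ℝ) :
    ∫ w : ℝ, (sinhQuot α β w : ℂ) * Complex.exp (x * Complex.I * w)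
      = ((2 * π * sinhQuotKernel α β x : ℝ) : ℂ) := by
  have hβ : 0 < β := hα.trans hαβ
  have hc : ∀ j : ℕ, 0 < (2 * (j : ℝ) + 1) * β - α := fun j => by
    nlinarith [mul_nonneg (Nat.cast_nonneg (α := ℝ) j) hβ.le]
  have hc' : ∀ j : ℕ, 0 < (2 * (j : ℝ) + 1) * β + α := fun j => by positivity
  have hint : ∀ {c : ℝ}, 0 < c →
      Integrable fun w : ℝ => (Real.exp (-c * |w|) : ℂ) * Complex.exp (x * Complex.I * w) :=
    fun hc => (integrable_exp_neg_mul_abs hc).ofReal.mul_bdd (c := 1)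
      (Continuous.aestronglyMeasurable (by fun_prop))
      (ae_of_all _ fun w => (norm_exp_ofReal_mul_I_mul_ofReal x w).le)
  refine tendsto_nhds_unique (hasSum_integral_sinhQuot_mul_exp hα hαβ x).tendsto_sum_nat
    ((tendsto_sum_range_sinhQuotKernel hα hαβ x).congr fun n => Finset.sum_congr rfl fun j _ => ?_)
  rw [← integral_exp_neg_mul_abs_mul_exp (hc j), ← integral_exp_neg_mul_abs_mul_exp (hc' j),
    ← integral_sub (hint (hc j)) (hint (hc' j))]
  simp only [Complex.ofReal_sub, sub_mul]

lemma half_one_add_cos_mul_cosh_le (θ y : ℝ) :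
    (1 + Real.cos θ) / 2 * Real.cosh y ≤ Real.cosh y + Real.cos θ := by
  nlinarith [Real.one_le_cosh y, Real.cos_le_one θ, Real.neg_one_le_cos θ]

lemma pi_mul_div_mem_Ioo (hα : 0 < α) (hαβ : α < β) : π * α / β ∈ Set.Ioo 0 π := by
  have hβ : 0 < β := hα.trans hαβ
  exact ⟨by positivity, (div_lt_iff₀ hβ).2 (by gcongr)⟩

lemma one_add_cos_pi_mul_div_pos (hα : 0 < α) (hαβ : α < β) : 0 < 1 + Real.cos (π * α / β) := by
  obtain ⟨h0, hπ⟩ := pi_mul_div_mem_Ioo hα hαβ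
  have := Real.cos_lt_cos_of_nonneg_of_le_pi h0.le le_rfl hπ
  rw [Real.cos_pi] at this
  linarith

lemma cosh_add_cos_pos (hα : 0 < α) (hαβ : α < β) (x : ℝ) :
    0 < Real.cosh (π * x / β) + Real.cos (π * α / β) :=
  (mul_pos (half_pos (one_add_cos_pi_mul_div_pos hα hαβ)) (Real.cosh_pos _)).trans_le
    (half_one_add_cos_mul_cosh_le _ _)

lemma sinhQuotKernel_pos (hα : 0 < α) (hαβ : α < β) (x : ℝ) : 0 < sinhQuotKernel α β x := by
  have hβ : 0 < β := hα.trans hαβ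
  exact mul_pos (by positivity) (div_pos (Real.sin_pos_of_mem_Ioo (pi_mul_div_mem_Ioo hα hαβ))
    (cosh_add_cos_pos hα hαβ x))

lemma continuous_sinhQuotKernel (hα : 0 < α) (hαβ : α < β) : Continuous (sinhQuotKernel α β) :=
  continuous_const.mul
    (continuous_const.div (by fun_prop) fun x => (cosh_add_cos_pos hα hαβ x).ne')

lemma exp_abs_le_two_mul_cosh (y : ℝ) : Real.exp |y| ≤ 2 * Real.cosh y := by
  rw [← Real.cosh_abs, Real.cosh_eq]
  linarith [Real.exp_pos (-|y|)]

lemma exists_sinhQuotKernel_le_exp (hα : 0 < α) (hαβ : α < β) :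
    ∃ C, ∀ x, sinhQuotKernel α β x ≤ C * Real.exp (-(π / β) * |x|) := by
  have hβ : 0 < β := hα.trans hαβ
  have hs : 0 < Real.sin (π * α / β) := Real.sin_pos_of_mem_Ioo (pi_mul_div_mem_Ioo hα hαβ)
  have hc := one_add_cos_pi_mul_div_pos hα hαβ
  refine ⟨1 / (2 * β) * (Real.sin (π * α / β) * (4 / (1 + Real.cos (π * α / β)))), fun x => ?_⟩
  have habs : |π * x / β| = π / β * |x| := by
    rw [abs_div, abs_mul, abs_of_pos Real.pi_pos, abs_of_pos hβ, mul_div_right_comm]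
  have hexp : Real.exp (π / β * |x|) * (1 + Real.cos (π * α / β)) / 4
      ≤ Real.cosh (π * x / β) + Real.cos (π * α / β) := by
    refine le_trans ?_ (half_one_add_cos_mul_cosh_le _ _)
    have := habs ▸ exp_abs_le_two_mul_cosh (π * x / β)
    nlinarith
  calc sinhQuotKernel α β x ≤ 1 / (2 * β) * (Real.sin (π * α / β)
        / (Real.exp (π / β * |x|) * (1 + Real.cos (π * α / β)) / 4)) := by
        unfold sinhQuotKernel
        gcongr
    _ = _ := by
        rw [neg_mul, Real.exp_neg]
        field_simp

lemma integrable_sinhQuotKernel (hα : 0 < α) (hαβ : α < β) : Integrable (sinhQuotKernel α β) := by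
  have hβ : 0 < β := hα.trans hαβ
  obtain ⟨C, hC⟩ := exists_sinhQuotKernel_le_exp hα hαβ
  refine ((integrable_exp_neg_mul_abs (c := π / β) (by positivity)).const_mul C).mono'
    (continuous_sinhQuotKernel hα hαβ).aestronglyMeasurable (ae_of_all _ fun w => ?_)
  rw [Real.norm_of_nonneg (sinhQuotKernel_pos hα hαβ w).le]
  exact hC w

open FourierTransform in
lemma fourierInv_sinhQuot (hα : 0 < α) (hαβ : α < β) :
    𝓕⁻ (fun v : ℝ => (sinhQuot α β (2 * π * v) : ℂ)) = fun x => (sinhQuotKernel α β x : ℂ) := by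
  funext x
  have hpi : (π : ℂ) ≠ 0 := by exact_mod_cast Real.pi_ne_zero
  have hscale := Measure.integral_comp_mul_left
    (fun w : ℝ => (sinhQuot α β w : ℂ) * Complex.exp (x * Complex.I * w)) (2 * π)
  rw [integral_sinhQuot_mul_exp hα hαβ] at hscale
  calc 𝓕⁻ (fun v : ℝ => (sinhQuot α β (2 * π * v) : ℂ)) x
      = ∫ v : ℝ, (sinhQuot α β (2 * π * v) : ℂ)
          * Complex.exp (x * Complex.I * (2 * π * v : ℝ)) := by
        rw [Real.fourierInv_eq']
        refine integral_congr_ae (ae_of_all _ fun v => ?_)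
        simp only [smul_eq_mul, mul_comm (Complex.exp _), RCLike.inner_apply, conj_trivial]
        congr 2
        push_cast
        ring
    _ = (sinhQuotKernel α β x : ℂ) := by
        rw [hscale, abs_of_pos (by positivity), Complex.real_smul]
        push_cast
        field_simp

open FourierTransform in
lemma fourier_sinhQuotKernel (hα : 0 < α) (hαβ : α < β) :
    𝓕 (fun x : ℝ => (sinhQuotKernel α β x : ℂ))
      = fun v : ℝ => (sinhQuot α β (2 * π * v) : ℂ) := by
  have hβ : 0 < β := hα.trans hαβ
  have hsymm : 𝓕 (fun v : ℝ => (sinhQuot α β (2 * π * v) : ℂ))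
      = fun x => (sinhQuotKernel α β x : ℂ) := by
    rw [← fourierInv_sinhQuot hα hαβ, Real.fourierInv_eq_fourier_comp_neg]
    simp only [mul_neg, sinhQuot_neg]
  have hcont := continuous_sinhQuot (α := α) hβ.ne'
  rw [← fourierInv_sinhQuot hα hαβ]
  refine Continuous.fourier_fourierInv_eq (by fun_prop)
    ((integrable_sinhQuot hα hαβ).comp_mul_left' (by positivity)).ofReal ?_
  rw [hsymm]
  exact (integrable_sinhQuotKernel hα hαβ).ofReal

lemma integral_sinhQuotKernel (hα : 0 < α) (hαβ : α < β) :
    ∫ x, sinhQuotKernel α β x = α / β := by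
  have h := congrFun (fourier_sinhQuotKernel hα hαβ) 0
  rw [Real.fourier_real_eq_integral_exp_smul] at h
  simp only [mul_zero, zero_mul, Complex.ofReal_zero, Complex.exp_zero, one_smul, sinhQuot,
    if_true, integral_complex_ofReal] at h
  exact_mod_cast h

end SinhQuot

/-! ### Inverting a convolution equation by characters -/

section Dressing

open scoped Convolution

variable {G : Type*} [AddCommGroup G] [MeasurableSpace G] {μ : Measure G}

/-- The Fourier coefficient `∫ χ(t) f(t) dμ(t)` of a real function at the character `χ`. It covers
the Fourier transform on `ℝ` and the Fourier coefficients on `AddCircle π` at once. -/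
def charIntegral (μ : Measure G) (χ : AddChar G Circle) (f : G → ℝ) : ℂ := ∫ t, (χ t : ℂ) * f t ∂μ

variable {χ : AddChar G Circle} {f g : G → ℝ}

lemma integrable_addChar_mul (hχ : AEStronglyMeasurable χ μ) (hf : Integrable f μ) :
    Integrable (fun t => (χ t : ℂ) * f t) μ :=
  hf.ofReal.bdd_mul (c := 1) (continuous_subtype_val.comp_aestronglyMeasurable hχ)
    (ae_of_all _ fun t => (Circle.norm_coe (χ t)).le)

lemma charIntegral_add (hχ : AEStronglyMeasurable χ μ) (hf : Integrable f μ)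
    (hg : Integrable g μ) :
    charIntegral μ χ (f + g) = charIntegral μ χ f + charIntegral μ χ g := by
  rw [charIntegral, charIntegral, charIntegral,
    ← integral_add (integrable_addChar_mul hχ hf) (integrable_addChar_mul hχ hg)]
  simp only [Pi.add_apply, Complex.ofReal_add, mul_add]

lemma charIntegral_sub (hχ : AEStronglyMeasurable χ μ) (hf : Integrable f μ)
    (hg : Integrable g μ) :
    charIntegral μ χ (f - g) = charIntegral μ χ f - charIntegral μ χ g := by
  rw [charIntegral, charIntegral, charIntegral,
    ← integral_sub (integrable_addChar_mul hχ hf) (integrable_addChar_mul hχ hg)]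
  simp only [Pi.sub_apply, Complex.ofReal_sub, mul_sub]

lemma charIntegral_convolution [MeasurableAdd₂ G] [MeasurableNeg G] [SFinite μ]
    [μ.IsAddRightInvariant] (hχ : AEStronglyMeasurable χ μ) (hf : Integrable f μ)
    (hg : Integrable g μ) :
    charIntegral μ χ (f ⋆[ContinuousLinearMap.mul ℝ ℝ, μ] g)
      = charIntegral μ χ f * charIntegral μ χ g := by
  have h := integral_convolution (ContinuousLinearMap.mul ℂ ℂ) (integrable_addChar_mul hχ hf)
    (integrable_addChar_mul hχ hg)
  rw [ContinuousLinearMap.mul_apply'] at h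
  rw [charIntegral, charIntegral, charIntegral, ← h]
  refine integral_congr_ae (ae_of_all _ fun x => ?_)
  simp only [convolution_mul]
  rw [← integral_complex_ofReal, ← integral_const_mul]
  refine integral_congr_ae (ae_of_all _ fun t => ?_)
  have hmul : (χ x : ℂ) = χ t * χ (x - t) := by
    rw [← Circle.coe_mul, ← AddChar.map_add_eq_mul, add_sub_cancel]
  simp only [hmul, Complex.ofReal_mul]
  ring

/-- Continuous, bounded and integrable functions: the class of kernels for which convolution with
an integrable function is again continuous and integrable. -/
structure IsAdmissible {Y : Type*} [TopologicalSpace Y] [MeasurableSpace Y] (μ : Measure Y)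
    (f : Y → ℝ) : Prop where
  continuous : Continuous f
  bddAbove : BddAbove (Set.range fun x => ‖f x‖)
  integrable : Integrable f μ

lemma isAdmissible_of_continuous {Y : Type*} [TopologicalSpace Y] [MeasurableSpace Y]
    [CompactSpace Y] [OpensMeasurableSpace Y] {μ : Measure Y} [IsFiniteMeasureOnCompacts μ]
    {f : Y → ℝ} (hf : Continuous f) : IsAdmissible μ f where
  continuous := hf
  bddAbove := (isCompact_range hf.norm).bddAbove
  integrable := hf.integrable_of_hasCompactSupport (HasCompactSupport.of_compactSpace f)

variable [TopologicalSpace G]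

/-- Kernels `K, X, S, Q` whose Fourier coefficients, along a family `𝒳` of characters separating
continuous integrable functions, satisfy `(1 + K)⁻¹ X = S` and `(1 + K)⁻¹ K = S Q`. In Bethe ansatz
language `S` is the dressed version of `X`. -/
structure IsDressing (μ : Measure G) (𝒳 : Set (AddChar G Circle)) (K X S Q : G → ℝ) : Prop where
  continuous_char : ∀ χ ∈ 𝒳, Continuous χ
  eq_zero : ∀ f : G → ℝ, Continuous f → Integrable f μ → (∀ χ ∈ 𝒳, charIntegral μ χ f = 0) → f = 0
  kernel : IsAdmissible μ K
  source : IsAdmissible μ X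
  dressed : IsAdmissible μ S
  resolvent : Integrable Q μ
  one_add_ne_zero : ∀ χ ∈ 𝒳, 1 + charIntegral μ χ K ≠ 0
  one_add_mul_dressed :
    ∀ χ ∈ 𝒳, (1 + charIntegral μ χ K) * charIntegral μ χ S = charIntegral μ χ X
  source_mul_resolvent :
    ∀ χ ∈ 𝒳, charIntegral μ χ X * charIntegral μ χ Q = charIntegral μ χ K

variable [IsTopologicalAddGroup G] [BorelSpace G] [SecondCountableTopology G]

lemma IsAdmissible.continuous_convolution (hg : IsAdmissible μ g) (hf : Integrable f μ) :
    Continuous (f ⋆[ContinuousLinearMap.mul ℝ ℝ, μ] g) :=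
  hg.bddAbove.continuous_convolution_right_of_integrable _ hf hg.continuous

variable [SFinite μ] [μ.IsAddRightInvariant] {𝒳 : Set (AddChar G Circle)} {K X S Q g₁ g₂ : G → ℝ}

theorem IsDressing.eq_add_convolution (D : IsDressing μ 𝒳 K X S Q)
    (hg₁ : Integrable g₁ μ) (hg₂ : Integrable g₂ μ)
    (heq : g₁ + g₂ + (g₁ ⋆[ContinuousLinearMap.mul ℝ ℝ, μ] K) = X) :
    g₁ + g₂ = S
      + ((g₂ ⋆[ContinuousLinearMap.mul ℝ ℝ, μ] Q) ⋆[ContinuousLinearMap.mul ℝ ℝ, μ] S) := by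
  have hg₁K := hg₁.integrable_convolution (ContinuousLinearMap.mul ℝ ℝ) D.kernel.integrable
  have hg₂Q := hg₂.integrable_convolution (ContinuousLinearMap.mul ℝ ℝ) D.resolvent
  have hg₂QS := hg₂Q.integrable_convolution (ContinuousLinearMap.mul ℝ ℝ) D.dressed.integrable
  have hcont : Continuous (g₁ + g₂) := by
    rw [eq_sub_of_add_eq heq]
    exact D.source.continuous.sub (D.kernel.continuous_convolution hg₁)
  refine sub_eq_zero.1 (D.eq_zero _
    (hcont.sub (D.dressed.continuous.add (D.dressed.continuous_convolution hg₂Q)))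
    ((hg₁.add hg₂).sub (D.dressed.integrable.add hg₂QS)) fun χ hχ => ?_)
  have hm : AEStronglyMeasurable χ μ := (D.continuous_char χ hχ).aestronglyMeasurable
  have hX' : charIntegral μ χ g₁ + charIntegral μ χ g₂ + charIntegral μ χ g₁ * charIntegral μ χ K
      = charIntegral μ χ X := by
    rw [← heq, charIntegral_add hm (hg₁.add hg₂) hg₁K, charIntegral_add hm hg₁ hg₂,
      charIntegral_convolution hm hg₁ D.kernel.integrable]
  rw [charIntegral_sub hm (hg₁.add hg₂) (D.dressed.integrable.add hg₂QS),
    charIntegral_add hm hg₁ hg₂, charIntegral_add hm D.dressed.integrable hg₂QS,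
    charIntegral_convolution hm hg₂Q D.dressed.integrable,
    charIntegral_convolution hm hg₂ D.resolvent]
  refine (mul_eq_zero.1 ?_).resolve_left (D.one_add_ne_zero χ hχ)
  linear_combination hX'
    - (1 + charIntegral μ χ g₂ * charIntegral μ χ Q) * D.one_add_mul_dressed χ hχ
    - charIntegral μ χ g₂ * D.source_mul_resolvent χ hχ

theorem IsDressing.dressed_le (D : IsDressing μ 𝒳 K X S Q) (hS₀ : 0 ≤ S) (hQ₀ : 0 ≤ Q)
    (hg₁ : Integrable g₁ μ) (hg₂ : Integrable g₂ μ) (hg₂₀ : 0 ≤ g₂)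
    (heq : g₁ + g₂ + (g₁ ⋆[ContinuousLinearMap.mul ℝ ℝ, μ] K) = X) : S ≤ g₁ + g₂ := by
  rw [D.eq_add_convolution hg₁ hg₂ heq]
  refine le_add_of_nonneg_right fun x => ?_
  simp only [convolution_mul]
  exact integral_nonneg fun t => mul_nonneg
    (integral_nonneg fun s => mul_nonneg (hg₂₀ s) (hQ₀ _)) (hS₀ _)

end Dressing

/-! ### Dressing on the real line -/

section RealLine

open scoped Convolution FourierTransform

variable {α β ζ q : ℝ} {g K : ℝ → ℝ}

lemma isAdmissible_sinhQuotKernel (hα : 0 < α) (hαβ : α < β) :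
    IsAdmissible volume (sinhQuotKernel α β) where
  continuous := continuous_sinhQuotKernel hα hαβ
  bddAbove := by
    obtain ⟨C, hC⟩ := exists_sinhQuotKernel_le_exp hα hαβ
    have hβ : 0 < β := hα.trans hαβ
    have hC₀ : 0 ≤ C := by simpa using (sinhQuotKernel_pos hα hαβ 0).le.trans (hC 0)
    refine ⟨C, ?_⟩
    rintro _ ⟨x, rfl⟩
    simp only [Real.norm_of_nonneg (sinhQuotKernel_pos hα hαβ x).le]
    refine (hC x).trans (mul_le_of_le_one_right hC₀ (Real.exp_le_one_iff.2 ?_))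
    rw [neg_mul]
    exact neg_nonpos.2 (by positivity)
  integrable := integrable_sinhQuotKernel hα hαβ

lemma charIntegral_mulShift_fourierChar (f : ℝ → ℝ) (w : ℝ) :
    charIntegral volume (Real.fourierChar.mulShift (-w)) f = 𝓕 (fun x => (f x : ℂ)) w := by
  rw [Real.fourier_real_eq, charIntegral]
  refine integral_congr_ae (ae_of_all _ fun t => ?_)
  simp only [AddChar.mulShift_apply, Circle.smul_def, smul_eq_mul, neg_mul, mul_comm w]

lemma eq_zero_of_fourier_eq_zero {f : ℝ → ℝ} (hf : Continuous f) (hfi : Integrable f)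
    (h : ∀ w, 𝓕 (fun x => (f x : ℂ)) w = 0) : f = 0 := by
  have h0 : 𝓕 (fun x => (f x : ℂ)) = 0 := funext h
  have hinv := Continuous.fourierInv_fourier_eq (f := fun x => (f x : ℂ)) (by fun_prop) hfi.ofReal
    (h0 ▸ integrable_zero _ _ _)
  funext x
  have hx := congrFun hinv x
  rw [h0, Real.fourierInv_eq] at hx
  simp only [Pi.zero_apply, smul_zero, integral_zero] at hx
  exact_mod_cast hx.symm

lemma xiMl_eq_sinhQuotKernel (ζ : ℝ) : xiMl ζ = sinhQuotKernel ((π - ζ) / 2) (π / 2) := by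
  funext x
  have hcos : Real.cos ζ = 2 * Real.cos (ζ / 2) ^ 2 - 1 := by
    rw [← Real.cos_two_mul, mul_div_cancel₀ ζ two_ne_zero]
  rw [xiMl, sinhQuotKernel, show π * ((π - ζ) / 2) / (π / 2) = π - ζ by field_simp,
    show π * x / (π / 2) = 2 * x by field_simp, Real.sin_pi_sub, Real.cos_pi_sub,
    Real.cosh_two_mul, hcos, Real.cosh_sq, Real.cos_sq', mul_div_cancel₀ π two_ne_zero,
    div_mul_div_comm, one_mul]
  congr 1
  ring

lemma Kml_eq_xiMl (ζ : ℝ) : Kml ζ = xiMl (2 * ζ) := by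
  funext x
  rw [Kml, xiMl, mul_div_cancel_left₀ ζ two_ne_zero]

lemma Kml_eq_sinhQuotKernel (ζ : ℝ) : Kml ζ = sinhQuotKernel ((π - 2 * ζ) / 2) (π / 2) := by
  rw [Kml_eq_xiMl, xiMl_eq_sinhQuotKernel]

lemma rhoInf_eq_sinhQuotKernel (hζ : 0 < ζ) : rhoInf ζ = sinhQuotKernel (ζ / 2) ζ := by
  funext x
  rw [rhoInf, sinhQuotKernel, show π * (ζ / 2) / ζ = π / 2 by field_simp, Real.sin_pi_div_two,
    Real.cos_pi_div_two, add_zero, div_mul_div_comm, one_mul]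

lemma one_add_sinhQuot_mul_sinhQuot (hζ : 0 < ζ) (w : ℝ) :
    (1 + sinhQuot ((π - 2 * ζ) / 2) (π / 2) w) * sinhQuot (ζ / 2) ζ w
      = sinhQuot ((π - ζ) / 2) (π / 2) w := by
  by_cases hw : w = 0
  · simp only [sinhQuot, if_pos hw]
    field_simp
    ring
  have hsum : Real.sinh (π / 2 * w) + Real.sinh ((π - 2 * ζ) / 2 * w)
      = 2 * Real.sinh ((π - ζ) / 2 * w) * Real.cosh (ζ / 2 * w) := by
    rw [show π / 2 * w = (π - ζ) / 2 * w + ζ / 2 * w by ring,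
      show (π - 2 * ζ) / 2 * w = (π - ζ) / 2 * w - ζ / 2 * w by ring,
      Real.sinh_add, Real.sinh_sub]
    ring
  have hdouble : Real.sinh (ζ * w) = 2 * Real.sinh (ζ / 2 * w) * Real.cosh (ζ / 2 * w) := by
    rw [← Real.sinh_two_mul]
    ring_nf
  have hζw : Real.sinh (ζ / 2 * w) ≠ 0 := Real.sinh_ne_zero.2 (by positivity)
  have hπw : Real.sinh (π / 2 * w) ≠ 0 := Real.sinh_ne_zero.2 (by positivity)
  have hcosh := (Real.cosh_pos (ζ / 2 * w)).ne'
  simp only [sinhQuot, if_neg hw]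
  rw [one_add_div hπw, hsum, hdouble]
  generalize Real.sinh (ζ / 2 * w) = a at *
  generalize Real.sinh (π / 2 * w) = b at *
  generalize Real.cosh (ζ / 2 * w) = c at *
  field_simp

lemma sinhQuot_mul_sinhQuot {γ : ℝ} (hβ : β ≠ 0) (w : ℝ) :
    sinhQuot β γ w * sinhQuot α β w = sinhQuot α γ w := by
  by_cases hw : w = 0
  · simp only [sinhQuot, if_pos hw]
    field_simp
  have hβw : Real.sinh (β * w) ≠ 0 := Real.sinh_ne_zero.2 (mul_ne_zero hβ hw)
  simp only [sinhQuot, if_neg hw]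
  field_simp

lemma isDressing_ml (hζ : 0 < ζ) (hζ' : ζ < π / 2) :
    IsDressing volume (Set.range fun w : ℝ => Real.fourierChar.mulShift (-w)) (Kml ζ) (xiMl ζ)
      (rhoInf ζ) (sinhQuotKernel ((π - 2 * ζ) / 2) ((π - ζ) / 2)) := by
  have hK₀ : 0 < (π - 2 * ζ) / 2 := by linarith
  have hK : (π - 2 * ζ) / 2 < π / 2 := by linarith
  have hX₀ : 0 < (π - ζ) / 2 := by linarith
  have hX : (π - ζ) / 2 < π / 2 := by linarith
  have hS₀ : 0 < ζ / 2 := by linarith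
  have hS : ζ / 2 < ζ := by linarith
  have hQ : (π - 2 * ζ) / 2 < (π - ζ) / 2 := by linarith
  have hfourier : ∀ {a b : ℝ}, 0 < a → a < b → ∀ w,
      charIntegral volume (Real.fourierChar.mulShift (-w)) (sinhQuotKernel a b)
        = (sinhQuot a b (2 * π * w) : ℂ) := fun ha hab w => by
    rw [charIntegral_mulShift_fourierChar, fourier_sinhQuotKernel ha hab]
  rw [Kml_eq_sinhQuotKernel, xiMl_eq_sinhQuotKernel, rhoInf_eq_sinhQuotKernel hζ]
  refine ⟨?_, fun f hf hfi h => ?_, isAdmissible_sinhQuotKernel hK₀ hK,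
    isAdmissible_sinhQuotKernel hX₀ hX, isAdmissible_sinhQuotKernel hS₀ hS,
    integrable_sinhQuotKernel hK₀ hQ, ?_, ?_, ?_⟩
  · rintro _ ⟨w, rfl⟩
    exact Real.continuous_fourierChar.comp (continuous_const_mul _)
  · exact eq_zero_of_fourier_eq_zero hf hfi fun w => by
      rw [← charIntegral_mulShift_fourierChar]
      exact h _ ⟨w, rfl⟩
  · rintro _ ⟨w, rfl⟩
    rw [hfourier hK₀ hK]
    have := sinhQuot_pos hK₀ (hK₀.trans hK) (2 * π * w)
    exact_mod_cast (by positivity : (1 + sinhQuot _ _ (2 * π * w) : ℝ) ≠ 0)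
  · rintro _ ⟨w, rfl⟩
    rw [hfourier hK₀ hK, hfourier hX₀ hX, hfourier hS₀ hS]
    exact_mod_cast one_add_sinhQuot_mul_sinhQuot hζ _
  · rintro _ ⟨w, rfl⟩
    rw [hfourier hK₀ hK, hfourier hX₀ hX, hfourier hK₀ hQ]
    exact_mod_cast sinhQuot_mul_sinhQuot hX₀.ne' _

lemma indicator_Ioc_convolution (hq : 0 ≤ q) (l : ℝ) :
    ((Set.Ioc (-q) q).indicator g ⋆[ContinuousLinearMap.mul ℝ ℝ, volume] K) l
      = ∫ m in (-q)..q, K (l - m) * g m := by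
  rw [convolution_mul, intervalIntegral.integral_of_le (by linarith),
    ← integral_indicator measurableSet_Ioc]
  refine integral_congr_ae (ae_of_all _ fun t => ?_)
  by_cases ht : t ∈ Set.Ioc (-q) q
  · simp only [Set.indicator_of_mem ht, mul_comm]
  · simp only [Set.indicator_of_notMem ht, zero_mul]

lemma IsBEml.add_convolution_eq (hq : 0 ≤ q) (h : IsBEml ζ q g) :
    g + ((Set.Ioc (-q) q).indicator g ⋆[ContinuousLinearMap.mul ℝ ℝ, volume] Kml ζ) = xiMl ζ := by
  funext l
  rw [Pi.add_apply, indicator_Ioc_convolution hq, h.2.2 l]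

lemma IsBEml.continuous (hζ : 0 < ζ) (hζ' : ζ < π / 2) (hq : 0 ≤ q) (h : IsBEml ζ q g) :
    Continuous g := by
  have D := isDressing_ml hζ hζ'
  rw [eq_sub_of_add_eq (h.add_convolution_eq hq)]
  exact D.source.continuous.sub
    (D.kernel.continuous_convolution (h.1.indicator measurableSet_Ioc))

theorem IsBEml.rhoInf_le (hζ : 0 < ζ) (hζ' : ζ < π / 2) (hq : 0 ≤ q) (h : IsBEml ζ q g)
    (hg : ∀ x, 0 < g x) (x : ℝ) : rhoInf ζ x ≤ g x := by
  have hg' : 0 ≤ g := fun x => (hg x).le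
  have hsplit := Set.indicator_self_add_compl (Set.Ioc (-q) q) g
  have hle := (isDressing_ml hζ hζ').dressed_le
    (fun x => by rw [rhoInf]; have := Real.cosh_pos (π * x / ζ); positivity)
    (fun x => (sinhQuotKernel_pos (by linarith) (by linarith) x).le)
    (h.1.indicator measurableSet_Ioc) (h.1.indicator measurableSet_Ioc.compl)
    (Set.indicator_nonneg fun x _ => hg' x) (by rw [hsplit, h.add_convolution_eq hq]) x
  rwa [hsplit] at hle

end RealLine

/-! ### Fourier series on a circle -/

section FourierSeries

variable {T : ℝ}

/-- The character of `AddCircle T` whose `charIntegral` is, up to the factor `T`, the `m`-th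
Fourier coefficient. -/
def circleChar (T : ℝ) (m : ℤ) : AddChar (AddCircle T) Circle :=
  AddCircle.toCircle_addChar.compAddMonoidHom (zsmulAddGroupHom (-m))

lemma coe_circleChar (m : ℤ) (t : AddCircle T) : (circleChar T m t : ℂ) = fourier (-m) t := rfl

lemma continuous_circleChar (m : ℤ) : Continuous (circleChar T m) :=
  AddCircle.continuous_toCircle.comp (continuous_zsmul _)

/-- The real function `F` on the circle is the pointwise sum of its Fourier series, with real
coefficients `a`. Evaluating at `0` shows that `a` is then summable. -/
def HasFourierSeries (a : ℤ → ℝ) (F : AddCircle T → ℝ) : Prop :=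
  ∀ t, HasSum (fun m : ℤ => (a m : ℂ) * fourier m t) (F t : ℂ)

variable {a : ℤ → ℝ} {F : AddCircle T → ℝ}

lemma HasFourierSeries.summable (h : HasFourierSeries a F) : Summable a := by
  have := (h 0).summable
  simp only [fourier_eval_zero, mul_one] at this
  exact_mod_cast this

lemma norm_coe_mul_fourier (m : ℤ) (t : AddCircle T) : ‖(a m : ℂ) * fourier m t‖ = ‖a m‖ := by
  rw [norm_mul, fourier_apply, Circle.norm_coe, mul_one, Complex.norm_real]

lemma HasFourierSeries.continuous (h : HasFourierSeries a F) : Continuous F := by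
  have hc : Continuous fun t : AddCircle T => ∑' m : ℤ, (a m : ℂ) * fourier m t :=
    continuous_tsum (fun m => continuous_const.mul (fourier m).continuous) h.summable.norm
      fun m t => (norm_coe_mul_fourier m t).le
  have hF : F = fun t => (∑' m : ℤ, (a m : ℂ) * fourier m t).re := by
    funext t
    rw [(h t).tsum_eq, Complex.ofReal_re]
  rw [hF]
  exact Complex.continuous_re.comp hc

variable [Fact (0 < T)]

lemma charIntegral_circleChar (F : AddCircle T → ℝ) (m : ℤ) :
    charIntegral volume (circleChar T m) F = T * fourierCoeff (fun t => (F t : ℂ)) m := by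
  have hT : (T : ℂ) ≠ 0 := by exact_mod_cast (Fact.out : 0 < T).ne'
  simp only [fourierCoeff, AddCircle.integral_haarAddCircle, charIntegral, coe_circleChar,
    Complex.real_smul, smul_eq_mul, Complex.ofReal_inv, mul_inv_cancel_left₀ hT]

lemma HasFourierSeries.fourierCoeff_eq (h : HasFourierSeries a F) (m : ℤ) :
    fourierCoeff (fun t => (F t : ℂ)) m = a m := by
  set G : ℤ → AddCircle T → ℂ := fun i t => fourier (-m) t * ((a i : ℂ) * fourier i t)
  have hG : ∀ i, Continuous (G i) := fun i =>
    (fourier (-m)).continuous.mul (continuous_const.mul (fourier i).continuous)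
  have hsum := hasSum_integral_of_summable_integral_norm (F := G) (μ := AddCircle.haarAddCircle)
    (fun i => (hG i).integrable_of_hasCompactSupport (HasCompactSupport.of_compactSpace _)) (by
      simpa only [G, norm_mul, norm_coe_mul_fourier, fourier_apply, Circle.norm_coe, one_mul,
        integral_const, probReal_univ, one_smul, mul_one, Complex.norm_real] using h.summable.norm)
  have htsum : ∀ t, ∑' i, G i t = fourier (-m) t • (F t : ℂ) := fun t =>
    ((h t).mul_left _).tsum_eq
  have hcoeff : ∀ i, ∫ t, G i t ∂AddCircle.haarAddCircle = if i = m then (a m : ℂ) else 0 :=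
    fun i => by
    have hi := congrFun (fourierCoeff_fourier (T := T) i) m
    have hci := fourierCoeff.const_mul (fourier i : AddCircle T → ℂ) (a i) m
    simp only [fourierCoeff, smul_eq_mul] at hi hci
    rw [hci, hi]
    split_ifs with him
    · rw [him, Pi.single_eq_same, mul_one]
    · rw [Pi.single_eq_of_ne (Ne.symm him), mul_zero]
  simp only [htsum, hcoeff] at hsum
  exact hsum.unique (hasSum_ite_eq m _)

lemma HasFourierSeries.charIntegral_eq (h : HasFourierSeries a F) (m : ℤ) :
    charIntegral volume (circleChar T m) F = T * a m := by
  rw [charIntegral_circleChar, h.fourierCoeff_eq]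

lemma eq_zero_of_charIntegral_circleChar_eq_zero (hF : Continuous F)
    (h : ∀ m, charIntegral volume (circleChar T m) F = 0) : F = 0 := by
  have hT : (T : ℂ) ≠ 0 := by exact_mod_cast (Fact.out : 0 < T).ne'
  let F' : C(AddCircle T, ℂ) := ⟨fun t => (F t : ℂ), by fun_prop⟩
  have hcoeff : fourierCoeff F' = 0 := funext fun m =>
    (mul_eq_zero.1 ((charIntegral_circleChar F m).symm.trans (h m))).resolve_left hT
  funext t
  have ht := has_pointwise_sum_fourier_series_of_summable (f := F') (hcoeff ▸ summable_zero) t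
  simp only [hcoeff, Pi.zero_apply, zero_smul] at ht
  exact Complex.ofReal_eq_zero.1 (ht.unique hasSum_zero)

end FourierSeries

lemma hasSum_pow_natAbs_mul_zpow {r : ℂ} (hr : ‖r‖ < 1) (w : Circle) :
    HasSum (fun m : ℤ => r ^ m.natAbs * (w : ℂ) ^ m)
      ((1 - r ^ 2) / ((1 - r * w) * (1 - r * (w : ℂ)⁻¹))) := by
  have hn : ∀ v : Circle, ‖r * (v : ℂ)‖ < 1 := fun v => by rwa [norm_mul, Circle.norm_coe, mul_one]
  have hne : ∀ v : Circle, 1 - r * (v : ℂ) ≠ 0 := fun v h => by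
    have := hn v
    rw [← sub_eq_zero.1 h, norm_one] at this
    exact this.false
  have h₁ := hasSum_geometric_of_norm_lt_one (hn w)
  have h₂ := (hasSum_geometric_of_norm_lt_one (hn w⁻¹)).mul_left (r * (w⁻¹ : Circle))
  have hsum := HasSum.of_nat_of_neg_add_one (f := fun m : ℤ => r ^ m.natAbs * (w : ℂ) ^ m)
    (h₁.congr_fun fun m => by simp [mul_pow])
    (h₂.congr_fun fun m => by
      have habs : (-((m : ℤ) + 1)).natAbs = m + 1 := by omega
      rw [habs, ← pow_succ', mul_pow, Circle.coe_inv, inv_pow, zpow_neg]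
      norm_cast)
  convert hsum using 1
  have hwinv : (w : ℂ) * (w⁻¹ : Circle) = 1 := by
    rw [← Circle.coe_mul, mul_inv_cancel, Circle.coe_one]
  have h₁' := hne w
  have h₂' := hne w⁻¹
  rw [← Circle.coe_inv]
  generalize ((w⁻¹ : Circle) : ℂ) = v at *
  field_simp
  linear_combination r ^ 2 * hwinv

/-! ### Dressing on the circle of length `π` -/

section CircleLine

open scoped Convolution FourierTransform

variable {ζ q : ℝ} {g : ℝ → ℝ}

instance : Fact (0 < π) := ⟨Real.pi_pos⟩

lemma xiMs_periodic (ζ : ℝ) : Function.Periodic (xiMs ζ) π := fun x => by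
  rw [xiMs, xiMs, Real.sin_add_pi, neg_sq]

lemma xiMs_neg (ζ x : ℝ) : xiMs ζ (-x) = xiMs ζ x := by
  rw [xiMs, xiMs, Real.sin_neg, neg_sq]

lemma Kms_eq_xiMs (ζ : ℝ) : Kms ζ = xiMs (2 * ζ) := by
  funext x
  rw [Kms, xiMs, mul_div_cancel_left₀ ζ two_ne_zero]

lemma xiMs_pos (hζ : 0 < ζ) (x : ℝ) : 0 < xiMs ζ x := by
  have := Real.sinh_pos_iff.2 hζ
  have := Real.sinh_pos_iff.2 (half_pos hζ)
  rw [xiMs]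
  positivity

lemma xiMs_eq_div_one_sub_two_mul_cos (hζ : 0 < ζ) (x : ℝ) :
    xiMs ζ x = (1 - Real.exp (-ζ) ^ 2)
      / (1 - 2 * Real.exp (-ζ) * Real.cos (2 * x) + Real.exp (-ζ) ^ 2) / π := by
  have := Real.sinh_pos_iff.2 (half_pos hζ)
  have hsum : Real.sin x ^ 2 + Real.sinh (ζ / 2) ^ 2 = (Real.cosh ζ - Real.cos (2 * x)) / 2 := by
    rw [show ζ = 2 * (ζ / 2) by ring, Real.cosh_two_mul, Real.cosh_sq, Real.cos_two_mul',
      Real.cos_sq']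
    ring_nf
  have hpos : Real.cosh ζ - Real.cos (2 * x) ≠ 0 := by
    have : 0 < Real.sin x ^ 2 + Real.sinh (ζ / 2) ^ 2 := by positivity
    linarith
  have hexp : Real.exp ζ ≠ 0 := (Real.exp_pos ζ).ne'
  have hnum : 1 - Real.exp (-ζ) ^ 2 = 2 * Real.exp (-ζ) * Real.sinh ζ := by
    rw [Real.sinh_eq, Real.exp_neg]
    field_simp
  have hden : 1 - 2 * Real.exp (-ζ) * Real.cos (2 * x) + Real.exp (-ζ) ^ 2
      = 2 * Real.exp (-ζ) * (Real.cosh ζ - Real.cos (2 * x)) := by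
    rw [Real.cosh_eq, Real.exp_neg]
    field_simp
    ring
  rw [xiMs, hsum, hnum, hden, mul_div_mul_left _ _ (by positivity)]
  field_simp

lemma hasFourierSeries_xiMs (hζ : 0 < ζ) :
    HasFourierSeries (fun m => Real.exp (-ζ) ^ m.natAbs / π) (xiMs_periodic ζ).lift := by
  intro t
  induction t using QuotientAddGroup.induction_on with | H x => ?_
  set r := Real.exp (-ζ) with hr
  set w := AddCircle.toCircle (x : AddCircle π) with hw
  have hr₁ : ‖(r : ℂ)‖ < 1 := by
    rw [Complex.norm_real, Real.norm_of_nonneg (Real.exp_pos _).le, Real.exp_lt_one_iff]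
    exact neg_lt_zero.2 hζ
  have hcos : (w : ℂ) + (w⁻¹ : Circle) = 2 * (Real.cos (2 * x) : ℂ) := by
    rw [Circle.coe_inv_eq_conj, Complex.add_conj, hw, AddCircle.toCircle_apply_mk,
      Circle.coe_exp, Complex.exp_ofReal_mul_I_re, show 2 * π / π * x = 2 * x by field_simp]
    push_cast
    rfl
  have hwinv : (w : ℂ) * (w⁻¹ : Circle) = 1 := by
    rw [← Circle.coe_mul, mul_inv_cancel, Circle.coe_one]
  have hval : ((xiMs_periodic ζ).lift (x : AddCircle π) : ℂ)
      = (1 - (r : ℂ) ^ 2) / ((1 - (r : ℂ) * w) * (1 - r * (w : ℂ)⁻¹)) / π := by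
    have hden : (1 - (r : ℂ) * w) * (1 - r * (w : ℂ)⁻¹)
        = ((1 - 2 * r * Real.cos (2 * x) + r ^ 2 : ℝ) : ℂ) := by
      rw [← Circle.coe_inv]
      rw [Complex.ofReal_add, Complex.ofReal_sub, Complex.ofReal_mul, Complex.ofReal_mul,
        Complex.ofReal_pow, Complex.ofReal_one, Complex.ofReal_ofNat]
      linear_combination -(r : ℂ) * hcos + (r : ℂ) ^ 2 * hwinv
    rw [hden, Function.Periodic.lift_coe, xiMs_eq_div_one_sub_two_mul_cos hζ, ← hr]
    norm_cast
  rw [hval]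
  refine ((hasSum_pow_natAbs_mul_zpow hr₁ w).div_const (π : ℂ)).congr_fun fun m => ?_
  rw [fourier_apply, AddCircle.toCircle_zsmul, Circle.coe_zpow]
  push_cast
  ring

lemma isBigO_sinhQuotKernel_rpow {α β : ℝ} (hα : 0 < α) (hαβ : α < β) :
    (fun x => (sinhQuotKernel α β x : ℂ)) =O[cocompact ℝ] fun x => |x| ^ (-2 : ℝ) := by
  have hβ : 0 < β := hα.trans hαβ
  obtain ⟨C, hC⟩ := exists_sinhQuotKernel_le_exp hα hαβ
  have hexp : (fun x => (sinhQuotKernel α β x : ℂ))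
      =O[cocompact ℝ] fun x => Real.exp (-(π / β) * |x|) :=
    Asymptotics.IsBigO.of_bound C <| .of_forall fun x => by
      rw [Complex.norm_real, Real.norm_of_nonneg (sinhQuotKernel_pos hα hαβ x).le,
        Real.norm_of_nonneg (Real.exp_pos _).le]
      exact hC x
  exact hexp.trans ((isLittleO_exp_neg_mul_rpow_atTop (by positivity) (-2)).isBigO.comp_tendsto
    tendsto_norm_cocompact_atTop)

lemma summable_exp_neg_mul_abs_intCast {c : ℝ} (hc : 0 < c) :
    Summable fun n : ℤ => Real.exp (-c * |(n : ℝ)|) := by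
  have hr : ‖(Real.exp (-c) : ℂ)‖ < 1 := by
    rw [Complex.norm_real, Real.norm_of_nonneg (Real.exp_pos _).le, Real.exp_lt_one_iff]
    exact neg_lt_zero.2 hc
  have h := (hasSum_pow_natAbs_mul_zpow hr 1).summable
  simp only [Circle.coe_one, one_zpow, mul_one] at h
  refine (Summable.congr (f := fun n : ℤ => Real.exp (-c) ^ n.natAbs) (by exact_mod_cast h)
    fun n => ?_)
  rw [← Real.exp_nat_mul, Nat.cast_natAbs, Int.cast_abs, mul_comm]

lemma summable_sinhQuotKernel_add_intCast {α β : ℝ} (hα : 0 < α) (hαβ : α < β) (x : ℝ) :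
    Summable fun n : ℤ => sinhQuotKernel α β (x + n) := by
  obtain ⟨C, hC⟩ := exists_sinhQuotKernel_le_exp hα hαβ
  have hβ : 0 < β := hα.trans hαβ
  have hC₀ : 0 ≤ C := by simpa using (sinhQuotKernel_pos hα hαβ 0).le.trans (hC 0)
  refine Summable.of_nonneg_of_le (fun n => (sinhQuotKernel_pos hα hαβ _).le) (fun n => ?_)
    ((summable_exp_neg_mul_abs_intCast (c := π / β) (by positivity)).mul_left
      (C * Real.exp (π / β * |x|)))
  refine (hC _).trans ?_
  rw [mul_assoc, ← Real.exp_add]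
  have habs : |(n : ℝ)| ≤ |x + n| + |x| := by simpa using abs_sub (x + n) x
  gcongr
  linear_combination π / β * habs

lemma hasSum_sinhQuot_mul_fourier {α β : ℝ} (hα : 0 < α) (hαβ : α < β) (x : ℝ) :
    HasSum (fun m : ℤ => (sinhQuot α β (2 * π * m) : ℂ) * fourier m (x : UnitAddCircle))
      ((∑' n : ℤ, sinhQuotKernel α β (x + n) : ℝ) : ℂ) := by
  have hsum : Summable fun m : ℤ => sinhQuot α β (2 * π * m) := by
    refine Summable.of_nonneg_of_le (fun m => (sinhQuot_pos hα (hα.trans hαβ) _).le)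
      (fun m => sinhQuot_le_exp hα hαβ _)
      ((summable_exp_neg_mul_abs_intCast (c := (β - α) * (2 * π))
        (mul_pos (sub_pos.2 hαβ) (by positivity))).congr fun m => ?_)
    rw [abs_mul, abs_of_pos (by positivity : 0 < 2 * π)]
    ring_nf
  have hF : ∀ m : ℤ, 𝓕 (fun x : ℝ => (sinhQuotKernel α β x : ℂ)) m
      = (sinhQuot α β (2 * π * m) : ℂ) := fun m => by
    rw [fourier_sinhQuotKernel hα hαβ]
  have hP := Real.tsum_eq_tsum_fourier_of_rpow_decay_of_summable
    (Complex.continuous_ofReal.comp (continuous_sinhQuotKernel hα hαβ)) one_lt_two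
    (isBigO_sinhQuotKernel_rpow hα hαβ)
    ((Complex.hasSum_ofReal.2 hsum.hasSum).summable.congr fun m => (hF m).symm) x
  rw [Complex.ofReal_tsum]
  have hsum' : Summable fun m : ℤ =>
      (sinhQuot α β (2 * π * m) : ℂ) * fourier m (x : UnitAddCircle) :=
    Summable.of_norm (hsum.norm.congr fun m =>
      (norm_coe_mul_fourier (a := fun m : ℤ => sinhQuot α β (2 * π * m)) m _).symm)
  refine hsum'.hasSum_iff.2 ?_
  simpa only [Function.comp_def, hF] using hP.symm

lemma rhoMs_eq_tsum (hζ : 0 < ζ) (x : ℝ) :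
    rhoMs ζ x = (1 / π) * ∑' n : ℤ, sinhQuotKernel (ζ / (2 * π)) (ζ / π) (x / π + n) := by
  rw [rhoMs, ← tsum_mul_left, ← tsum_mul_left, ← (Equiv.neg ℤ).tsum_eq]
  refine tsum_congr fun n => ?_
  have hcos : Real.cos (π * (ζ / (2 * π)) / (ζ / π)) = 0 := by
    rw [← Real.cos_pi_div_two]
    field_simp
  have hsin : Real.sin (π * (ζ / (2 * π)) / (ζ / π)) = 1 := by
    rw [← Real.sin_pi_div_two]
    field_simp
  have harg : π * (x / π + n) / (ζ / π) = -(π * (π * (-n) - x) / ζ) := by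
    field_simp
    ring
  rw [sinhQuotKernel, hcos, hsin, harg, Real.cosh_neg, add_zero, Equiv.neg_apply, Int.cast_neg]
  field_simp

lemma rhoMs_periodic (hζ : 0 < ζ) : Function.Periodic (rhoMs ζ) π := fun x => by
  rw [rhoMs_eq_tsum hζ, rhoMs_eq_tsum hζ, ← (Equiv.subRight (1 : ℤ)).tsum_eq]
  congr 1
  refine tsum_congr fun n => ?_
  rw [Equiv.subRight_apply]
  congr 1
  push_cast
  field_simp
  ring

lemma hasFourierSeries_rhoMs (hζ : 0 < ζ) :
    HasFourierSeries (fun m : ℤ => 1 / π * sinhQuot (ζ / (2 * π)) (ζ / π) (2 * π * m))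
      (rhoMs_periodic hζ).lift := by
  intro t
  induction t using QuotientAddGroup.induction_on with | H x => ?_
  have hα : 0 < ζ / (2 * π) := by positivity
  have hαβ : ζ / (2 * π) < ζ / π := by
    gcongr
    linarith [Real.pi_pos]
  have h := (hasSum_sinhQuot_mul_fourier hα hαβ (x / π)).mul_left ((1 / π : ℝ) : ℂ)
  rw [← Complex.ofReal_mul, ← rhoMs_eq_tsum hζ] at h
  refine h.congr_fun fun m => ?_
  rw [fourier_coe_apply, fourier_coe_apply]
  push_cast
  rw [div_one, mul_div_assoc]
  ring

lemma sinhQuot_two_mul {a : ℝ} (ha : a ≠ 0) (w : ℝ) :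
    sinhQuot a (2 * a) w = 1 / (2 * Real.cosh (a * w)) := by
  by_cases hw : w = 0
  · rw [sinhQuot, if_pos hw, hw, mul_zero, Real.cosh_zero]
    field_simp
  have hs : Real.sinh (a * w) ≠ 0 := Real.sinh_ne_zero.2 (mul_ne_zero ha hw)
  have hc : Real.cosh (a * w) ≠ 0 := (Real.cosh_pos _).ne'
  rw [sinhQuot, if_neg hw, mul_assoc, Real.sinh_two_mul]
  field_simp

lemma one_add_exp_mul_one_div_cosh (x : ℝ) :
    (1 + Real.exp (-(2 * |x|))) * (1 / (2 * Real.cosh x)) = Real.exp (-|x|) := by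
  have he : Real.exp (-(2 * |x|)) = Real.exp (-|x|) * Real.exp (-|x|) := by
    rw [← Real.exp_add]
    ring_nf
  have h₁ : Real.exp |x| * Real.exp (-|x|) = 1 := by rw [← Real.exp_add, add_neg_cancel,
    Real.exp_zero]
  have := Real.cosh_pos |x|
  rw [← Real.cosh_abs, he, mul_one_div, div_eq_iff (by positivity), Real.cosh_eq]
  linear_combination -h₁

lemma isDressing_ms (hζ : 0 < ζ) :
    IsDressing volume (Set.range (circleChar π)) (xiMs_periodic (2 * ζ)).lift
      (xiMs_periodic ζ).lift (rhoMs_periodic hζ).lift (xiMs_periodic ζ).lift := by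
  have hζ₂ : 0 < 2 * ζ := by positivity
  have hX : ∀ {η : ℝ}, 0 < η → ∀ m, charIntegral volume (circleChar π m) (xiMs_periodic η).lift
      = (Real.exp (-(η * |(m : ℝ)|)) : ℂ) := fun {η} hη m => by
    rw [(hasFourierSeries_xiMs hη).charIntegral_eq, ← Complex.ofReal_mul,
      mul_div_cancel₀ _ Real.pi_ne_zero, ← Real.exp_nat_mul, Nat.cast_natAbs, Int.cast_abs]
    ring_nf
  have hS : ∀ m, charIntegral volume (circleChar π m) (rhoMs_periodic hζ).lift
      = (1 / (2 * Real.cosh (ζ * m)) : ℝ) := fun m => by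
    rw [(hasFourierSeries_rhoMs hζ).charIntegral_eq, ← Complex.ofReal_mul, ← mul_assoc,
      mul_one_div_cancel Real.pi_ne_zero, one_mul, show ζ / π = 2 * (ζ / (2 * π)) by field_simp,
      sinhQuot_two_mul (by positivity)]
    field_simp
  have habs : ∀ m : ℤ, ζ * |(m : ℝ)| = |ζ * m| := fun m => by rw [abs_mul, abs_of_pos hζ]
  refine ⟨?_, fun f hf _ h => eq_zero_of_charIntegral_circleChar_eq_zero hf fun m => h _ ⟨m, rfl⟩,
    isAdmissible_of_continuous (hasFourierSeries_xiMs hζ₂).continuous,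
    isAdmissible_of_continuous (hasFourierSeries_xiMs hζ).continuous,
    isAdmissible_of_continuous (hasFourierSeries_rhoMs hζ).continuous,
    (isAdmissible_of_continuous (hasFourierSeries_xiMs hζ).continuous).integrable, ?_, ?_, ?_⟩
  · rintro _ ⟨m, rfl⟩
    exact continuous_circleChar m
  · rintro _ ⟨m, rfl⟩
    rw [hX hζ₂]
    exact_mod_cast (by positivity : (1 + Real.exp (-(2 * ζ * |(m : ℝ)|)) : ℝ) ≠ 0)
  · rintro _ ⟨m, rfl⟩
    rw [hX hζ₂, hX hζ, hS, mul_assoc, habs]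
    exact_mod_cast one_add_exp_mul_one_div_cosh _
  · rintro _ ⟨m, rfl⟩
    rw [hX hζ, hX hζ₂, ← Complex.ofReal_mul, ← Real.exp_add]
    ring_nf

/-- The image of `(-q, q]` in the circle `ℝ / πℤ`, for `q ≤ π / 2`. -/
def arc (q : ℝ) : Set (AddCircle π) :=
  {t | (AddCircle.equivIoc π (-(π / 2)) t : ℝ) ∈ Set.Ioc (-q) q}

lemma measurableSet_arc (q : ℝ) : MeasurableSet (arc q) :=
  (measurable_subtype_coe.comp (AddCircle.measurableEquivIoc π (-(π / 2))).measurable)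
    measurableSet_Ioc

lemma coe_mem_arc {m : ℝ} (hm : m ∈ Set.Ioc (-(π / 2)) (-(π / 2) + π)) :
    (m : AddCircle π) ∈ arc q ↔ m ∈ Set.Ioc (-q) q := by
  rw [arc, Set.mem_ofPred_eq, AddCircle.equivIoc_coe_of_mem hm]

lemma indicator_arc_convolution {K : ℝ → ℝ} (hq : 0 ≤ q) (hq' : q ≤ π / 2)
    (hg : Function.Periodic g π) (hK : Function.Periodic K π) (l : ℝ) :
    ((arc q).indicator hg.lift ⋆[ContinuousLinearMap.mul ℝ ℝ, volume] hK.lift) (l : AddCircle π)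
      = ∫ m in (-q)..q, K (l - m) * g m := by
  have hsub : Set.Ioc (-q) q ⊆ Set.Ioc (-(π / 2)) (-(π / 2) + π) :=
    Set.Ioc_subset_Ioc (by linarith) (by linarith)
  rw [convolution_mul, ← AddCircle.intervalIntegral_preimage π (-(π / 2)),
    intervalIntegral.integral_of_le (by linarith), intervalIntegral.integral_of_le (by linarith),
    ← Set.inter_eq_right.2 hsub, ← setIntegral_indicator measurableSet_Ioc]
  refine setIntegral_congr_fun measurableSet_Ioc fun m hm => ?_
  by_cases hmq : m ∈ Set.Ioc (-q) q
  · simp only [Set.indicator_of_mem hmq, Set.indicator_of_mem ((coe_mem_arc hm).2 hmq),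
      ← QuotientAddGroup.mk_sub, Function.Periodic.lift_coe, mul_comm]
  · simp only [Set.indicator_of_notMem hmq, Set.indicator_of_notMem (mt (coe_mem_arc hm).1 hmq),
      zero_mul]

lemma IsBEms.periodic (h : IsBEms ζ q g) : Function.Periodic g π := fun l => by
  have hK : ∀ m, Kms ζ (l + π - m) = Kms ζ (l - m) := fun m => by
    rw [Kms_eq_xiMs, add_sub_right_comm, xiMs_periodic]
  have hl := h.2 (l + π)
  simp only [hK, xiMs_periodic ζ l] at hl
  linarith [h.2 l]

lemma rhoMs_pos (hζ : 0 < ζ) (x : ℝ) : 0 < rhoMs ζ x := by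
  have hαβ : ζ / (2 * π) < ζ / π := by
    gcongr
    linarith [Real.pi_pos]
  have hpos := sinhQuotKernel_pos (by positivity) hαβ
  rw [rhoMs_eq_tsum hζ]
  have hsum := summable_sinhQuotKernel_add_intCast (by positivity) hαβ (x / π)
  exact mul_pos (by positivity) (hsum.tsum_pos (fun n => (hpos _).le) 0 (hpos _))

lemma exists_pos_le_rhoMs (hζ : 0 < ζ) : ∃ c, 0 < c ∧ ∀ x, c ≤ rhoMs ζ x := by
  obtain ⟨t, -, ht⟩ := isCompact_univ.exists_isMinOn Set.univ_nonempty
    (hasFourierSeries_rhoMs hζ).continuous.continuousOn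
  induction t using QuotientAddGroup.induction_on with | H y =>
  exact ⟨rhoMs ζ y, rhoMs_pos hζ y, fun x => ht (Set.mem_univ (x : AddCircle π))⟩

theorem IsBEms.rhoMs_le (hζ : 0 < ζ) (hq : 0 ≤ q) (hq' : q ≤ π / 2) (h : IsBEms ζ q g)
    (hg : ∀ x, 0 < g x) (x : ℝ) : rhoMs ζ x ≤ g x := by
  have hgp := h.periodic
  have hg' : 0 ≤ hgp.lift := fun t => by
    induction t using QuotientAddGroup.induction_on with | H y => exact (hg y).le
  have hgi : Integrable hgp.lift volume :=
    (isAdmissible_of_continuous (f := hgp.lift) (h.1.quotient_lift _)).integrable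
  have hsplit := Set.indicator_self_add_compl (arc q) hgp.lift
  have hle := (isDressing_ms hζ).dressed_le
    (fun t => by
      induction t using QuotientAddGroup.induction_on with | H y => exact (rhoMs_pos hζ y).le)
    (fun t => by
      induction t using QuotientAddGroup.induction_on with | H y => exact (xiMs_pos hζ y).le)
    (hgi.indicator (measurableSet_arc q)) (hgi.indicator (measurableSet_arc q).compl)
    (Set.indicator_nonneg fun t _ => hg' t) (by
      funext t
      induction t using QuotientAddGroup.induction_on with | H l => ?_
      rw [hsplit, Pi.add_apply, indicator_arc_convolution hq hq', Function.Periodic.lift_coe,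
        Function.Periodic.lift_coe, ← Kms_eq_xiMs, h.2 l]) (x : AddCircle π)
  rwa [hsplit] at hle

end CircleLine

/-! ### Positive definite kernels -/

section PositiveDefinite

variable {G ι Ω : Type*} [AddCommGroup G] [MeasurableSpace Ω] {ν : Measure Ω}
  {a : Ω → ℝ} {χ : Ω → AddChar G Circle} {f : G → ℝ}

lemma neg_eq_of_integral_addChar (hf : ∀ x, (f x : ℂ) = ∫ ω, (a ω : ℂ) * χ ω x ∂ν) (x : G) :
    f (-x) = f x := by
  rw [← Complex.ofReal_inj, hf, ← Complex.conj_ofReal (f x), hf, ← integral_conj]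
  refine integral_congr_ae (ae_of_all _ fun ω => ?_)
  simp only [AddChar.map_neg_eq_inv, Circle.coe_inv_eq_conj, map_mul, Complex.conj_ofReal]

lemma sum_sum_mul_addChar_sub [Fintype ι] (χ : AddChar G Circle) (x : ι → G) (v : ι → ℝ) :
    ∑ i, ∑ j, (v i : ℂ) * v j * χ (x i - x j) = Complex.normSq (∑ i, (v i : ℂ) * χ (x i)) := by
  rw [Complex.normSq_eq_conj_mul_self, map_sum, mul_comm, Finset.sum_mul_sum]
  refine Finset.sum_congr rfl fun i _ => Finset.sum_congr rfl fun j _ => ?_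
  rw [sub_eq_add_neg, AddChar.map_add_eq_mul, AddChar.map_neg_eq_inv, Circle.coe_mul,
    Circle.coe_inv_eq_conj, map_mul, Complex.conj_ofReal]
  ring

lemma sum_sum_mul_sub_nonneg [Fintype ι] (ha : 0 ≤ a)
    (hint : ∀ x, Integrable (fun ω => (a ω : ℂ) * χ ω x) ν)
    (hf : ∀ x, (f x : ℂ) = ∫ ω, (a ω : ℂ) * χ ω x ∂ν) (x : ι → G) (v : ι → ℝ) :
    0 ≤ ∑ i, ∑ j, v i * v j * f (x i - x j) := by
  have hsum : ((∑ i, ∑ j, v i * v j * f (x i - x j) : ℝ) : ℂ)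
      = (∫ ω, a ω * Complex.normSq (∑ i, (v i : ℂ) * χ ω (x i)) ∂ν : ℝ) := by
    rw [← integral_complex_ofReal]
    simp only [Complex.ofReal_sum, Complex.ofReal_mul, hf, ← sum_sum_mul_addChar_sub,
      ← integral_const_mul, Finset.mul_sum]
    rw [integral_finsetSum _ fun i _ => integrable_finsetSum _ fun j _ =>
      ((hint _).const_mul ((v i : ℂ) * v j)).congr (ae_of_all _ fun ω => mul_left_comm _ _ _)]
    refine Finset.sum_congr rfl fun i _ => ?_
    rw [integral_finsetSum _ fun j _ =>
      ((hint _).const_mul ((v i : ℂ) * v j)).congr (ae_of_all _ fun ω => mul_left_comm _ _ _)]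
    simp only [mul_left_comm]
  rw [Complex.ofReal_inj.1 hsum]
  exact integral_nonneg fun ω => mul_nonneg (ha ω) (Complex.normSq_nonneg _)

theorem posSemidef_of_integral_addChar [Finite ι] (ha : 0 ≤ a)
    (hint : ∀ x, Integrable (fun ω => (a ω : ℂ) * χ ω x) ν)
    (hf : ∀ x, (f x : ℂ) = ∫ ω, (a ω : ℂ) * χ ω x ∂ν) (x : ι → G) :
    (Matrix.of fun i j => f (x i - x j)).PosSemidef := by
  have := Fintype.ofFinite ι
  refine .of_dotProduct_mulVec_nonneg (Matrix.IsHermitian.ext fun i j => ?_) fun v => ?_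
  · rw [Matrix.of_apply, Matrix.of_apply, star_trivial, ← neg_sub, neg_eq_of_integral_addChar hf]
  · rw [star_trivial, Matrix.dot_mulVec_eq_sum_sum, Finset.sum_comm]
    simpa only [Matrix.of_apply, mul_right_comm] using sum_sum_mul_sub_nonneg ha hint hf x v

end PositiveDefinite

lemma posSemidef_sinhQuotKernel_sub {α β : ℝ} (hα : 0 < α) (hαβ : α < β) {ι : Type*} [Finite ι]
    (x : ι → ℝ) : (Matrix.of fun i j => sinhQuotKernel α β (x i - x j)).PosSemidef := by
  have hint : Integrable fun v => (sinhQuot α β (2 * π * v) : ℂ) :=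
    ((integrable_sinhQuot hα hαβ).comp_mul_left' (by positivity)).ofReal
  refine posSemidef_of_integral_addChar (ν := volume) (a := fun v => sinhQuot α β (2 * π * v))
    (χ := fun v => Real.fourierChar.mulShift v)
    (fun v => (sinhQuot_pos hα (hα.trans hαβ) _).le) (fun y => ?_) (fun y => ?_) x
  · refine (hint.bdd_mul (c := 1) (f := fun v => (Real.fourierChar (v * y) : ℂ))
      (Continuous.aestronglyMeasurable ?_) (ae_of_all _ fun v => (Circle.norm_coe _).le)).congr
      (ae_of_all _ fun v => mul_comm _ _)
    exact continuous_subtype_val.comp (Real.continuous_fourierChar.comp (continuous_mul_const y))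
  · rw [← congrFun (fourierInv_sinhQuot hα hαβ) y, Real.fourierInv_eq]
    refine integral_congr_ae (ae_of_all _ fun v => ?_)
    simp only [AddChar.mulShift_apply, Circle.smul_def, smul_eq_mul, RCLike.inner_apply,
      conj_trivial, mul_comm]

lemma HasFourierSeries.posSemidef {T : ℝ} {a : ℤ → ℝ} {F : AddCircle T → ℝ}
    (h : HasFourierSeries a F) (ha : 0 ≤ a) {ι : Type*} [Finite ι] (x : ι → AddCircle T) :
    (Matrix.of fun i j => F (x i - x j)).PosSemidef := by
  have hsum : ∀ t, Summable fun m : ℤ => (a m : ℂ) * (circleChar T (-m) t : ℂ) := fun t => by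
    simpa only [coe_circleChar, neg_neg] using (h t).summable
  refine posSemidef_of_integral_addChar (ν := .count) (χ := fun m => circleChar T (-m)) ha
    (fun t => integrable_count_iff.2 (hsum t).norm) (fun t => ?_) x
  rw [integral_countable (integrable_count_iff.2 (hsum t).norm)]
  simp only [coe_circleChar, neg_neg, measureReal_def, Measure.count_singleton, ENNReal.toReal_one,
    one_smul, (h t).tsum_eq]

/-! ### Symmetry of the density -/

/-- The properties of the kernel `K` shared by both regimes, relative to the interval `[-q, q]` on
which the roots live. -/
structure IsBetheKernel (K : ℝ → ℝ) (q : ℝ) : Prop where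
  continuous : Continuous K
  pos : ∀ x, 0 < K x
  neg : ∀ x, K (-x) = K x
  integral_le_one : ∀ x, ∫ m in (-q)..q, K (x - m) ≤ 1
  posSemidef : ∀ {n : ℕ} (x : Fin n → ℝ), (Matrix.of fun i j => K (x i - x j)).PosSemidef

section MaximumPrinciple

variable {K h : ℝ → ℝ} {q : ℝ}

lemma IsBetheKernel.nonpos_of_odd (D : IsBetheKernel K q) (hh : Continuous h)
    (hodd : ∀ x, h (-x) = -h x) (heq : ∀ l, h l + ∫ m in (-q)..q, K (l - m) * h m = 0) {x : ℝ}
    (hx : x ∈ Set.Icc (-q) q) : h x ≤ 0 := by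
  obtain ⟨y, hy, hmax⟩ := isCompact_Icc.exists_isMaxOn ⟨x, hx⟩ hh.continuousOn
  refine (hmax hx).trans (not_lt.1 fun hpos => ?_)
  have h₀ : h 0 = 0 := by linarith [neg_zero (G := ℝ) ▸ hodd 0]
  have hq : 0 < q := by
    refine lt_of_le_of_ne (by linarith [hx.1, hx.2]) fun hq => hpos.ne' ?_
    rw [← hq, neg_zero, Set.Icc_self, Set.mem_singleton_iff] at hy
    rw [hy, h₀]
  have hK := D.continuous
  have hgt : 0 < ∫ m in (-q)..q, K (y - m) * (h m + h y) := by
    refine intervalIntegral.integral_pos (by linarith) (by fun_prop) (fun m hm => ?_)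
      ⟨0, ⟨by linarith, hq.le⟩, ?_⟩
    · have hm' : h (-m) ≤ h y := hmax ⟨by linarith [hm.2], by linarith [hm.1]⟩
      rw [hodd] at hm'
      exact mul_nonneg (D.pos _).le (by linarith)
    · rw [h₀, zero_add]
      exact mul_pos (D.pos _) hpos
  have hsplit : ∫ m in (-q)..q, K (y - m) * (h m + h y)
      = (∫ m in (-q)..q, K (y - m) * h m) + (∫ m in (-q)..q, K (y - m)) * h y := by
    rw [← intervalIntegral.integral_mul_const, ← intervalIntegral.integral_add
      (Continuous.intervalIntegrable (by fun_prop) _ _)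
      (Continuous.intervalIntegrable (by fun_prop) _ _)]
    simp only [mul_add]
  linarith [heq y, mul_le_mul_of_nonneg_right (D.integral_le_one y) hpos.le]

variable {ξ g : ℝ → ℝ}

theorem IsBetheKernel.density_neg (D : IsBetheKernel K q) (hq : 0 ≤ q) (hg : Continuous g)
    (hξ : ∀ x, ξ (-x) = ξ x) (heq : ∀ l, g l + ∫ m in (-q)..q, K (l - m) * g m = ξ l) (x : ℝ) :
    g (-x) = g x := by
  have hK := D.continuous
  have hrefl : ∀ l, ∫ m in (-q)..q, K (l - m) * g (-m) = ∫ m in (-q)..q, K (-l - m) * g m :=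
    fun l => by
    have := intervalIntegral.integral_comp_neg (a := -q) (b := q) fun m => K (l + m) * g m
    simp only [neg_neg, ← sub_eq_add_neg] at this
    rw [this]
    simp only [← D.neg (l + _), neg_add']
  have heq' : ∀ l, g (-l) - g l + ∫ m in (-q)..q, K (l - m) * (g (-m) - g m) = 0 := fun l => by
    simp only [mul_sub]
    rw [intervalIntegral.integral_sub (Continuous.intervalIntegrable (by fun_prop) _ _)
      (Continuous.intervalIntegrable (by fun_prop) _ _), hrefl]
    linarith [heq l, heq (-l), hξ l]
  have hle : ∀ l ∈ Set.Icc (-q) q, g (-l) - g l ≤ 0 := fun l hl =>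
    D.nonpos_of_odd (by fun_prop) (fun l => by rw [neg_neg, neg_sub]) heq' hl
  have hzero : ∫ m in (-q)..q, K (x - m) * (g (-m) - g m) = 0 := by
    refine (intervalIntegral.integral_congr fun m hm => ?_).trans intervalIntegral.integral_zero
    rw [Set.uIcc_of_le (by linarith)] at hm
    have := hle (-m) ⟨by linarith [hm.2], by linarith [hm.1]⟩
    rw [neg_neg] at this
    exact mul_eq_zero_of_right _ (le_antisymm (hle m hm) (by linarith))
  linarith [heq' x]

end MaximumPrinciple

section Kernels

variable {ζ q : ℝ} {g : ℝ → ℝ}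

lemma isBetheKernel_Kml (hζ : 0 < ζ) (hζ' : ζ < π / 2) (hq : 0 ≤ q) :
    IsBetheKernel (Kml ζ) q := by
  have hα : 0 < (π - 2 * ζ) / 2 := by linarith
  have hαβ : (π - 2 * ζ) / 2 < π / 2 := by linarith
  rw [Kml_eq_sinhQuotKernel]
  refine ⟨continuous_sinhQuotKernel hα hαβ, sinhQuotKernel_pos hα hαβ,
    sinhQuotKernel_neg, fun x => ?_, posSemidef_sinhQuotKernel_sub hα hαβ⟩
  rw [intervalIntegral.integral_comp_sub_left, intervalIntegral.integral_of_le (by linarith)]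
  calc ∫ t in Set.Ioc (x - q) (x - -q), sinhQuotKernel ((π - 2 * ζ) / 2) (π / 2) t
      ≤ ∫ t, sinhQuotKernel ((π - 2 * ζ) / 2) (π / 2) t :=
        setIntegral_le_integral (integrable_sinhQuotKernel hα hαβ)
          (ae_of_all _ fun t => (sinhQuotKernel_pos hα hαβ t).le)
    _ ≤ 1 := by
        rw [integral_sinhQuotKernel hα hαβ]
        exact div_le_one_of_le₀ hαβ.le (by positivity)

lemma continuous_xiMs (hζ : 0 < ζ) : Continuous (xiMs ζ) :=
  (hasFourierSeries_xiMs hζ).continuous.comp (AddCircle.continuous_mk' π)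

lemma integral_xiMs (hζ : 0 < ζ) (a : ℝ) : ∫ t in a..a + π, xiMs ζ t = 1 := by
  have h := (hasFourierSeries_xiMs hζ).charIntegral_eq 0
  simp only [charIntegral, coe_circleChar, neg_zero, fourier_zero, one_mul, Int.natAbs_zero,
    pow_zero] at h
  rw [integral_complex_ofReal, ← AddCircle.intervalIntegral_preimage π a] at h
  simp only [Function.Periodic.lift_coe] at h
  rw [← Complex.ofReal_inj, h, ← Complex.ofReal_mul, mul_one_div_cancel Real.pi_ne_zero]

lemma isBetheKernel_Kms (hζ : 0 < ζ) (hq : 0 ≤ q) (hq' : q ≤ π / 2) :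
    IsBetheKernel (Kms ζ) q := by
  have hζ₂ : 0 < 2 * ζ := by positivity
  have hc := continuous_xiMs hζ₂
  rw [Kms_eq_xiMs]
  refine ⟨hc, xiMs_pos hζ₂, xiMs_neg _, fun x => ?_, fun y =>
    (hasFourierSeries_xiMs hζ₂).posSemidef (fun m => by positivity) (fun i => (y i : AddCircle π))⟩
  rw [intervalIntegral.integral_comp_sub_left, ← integral_xiMs hζ₂ (x - π / 2)]
  exact intervalIntegral.integral_mono_interval (by linarith) (by linarith) (by linarith)
    (ae_of_all _ fun t => (xiMs_pos hζ₂ t).le) (hc.intervalIntegrable _ _)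

lemma IsBEml.neg (hζ : 0 < ζ) (hζ' : ζ < π / 2) (hq : 0 ≤ q) (h : IsBEml ζ q g) (x : ℝ) :
    g (-x) = g x :=
  (isBetheKernel_Kml hζ hζ' hq).density_neg hq (h.continuous hζ hζ' hq)
    (by rw [xiMl_eq_sinhQuotKernel]; exact sinhQuotKernel_neg) h.2.2 x

lemma IsBEms.neg (hζ : 0 < ζ) (hq : 0 ≤ q) (hq' : q ≤ π / 2) (h : IsBEms ζ q g) (x : ℝ) :
    g (-x) = g x :=
  (isBetheKernel_Kms hζ hq hq').density_neg hq h.1 (xiMs_neg ζ) h.2 x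

end Kernels

/-! ### Riemann sums over interlaced vectors -/

lemma sum_range_le_sum_range_add_mul {f a : ℕ → ℝ} {n m : ℕ} {lo hi : ℝ} (hlohi : lo ≤ hi)
    (hf : ∀ i < n, f i ≤ hi) (ha : ∀ i < n, lo ≤ a i) (hfa : ∀ i, i + m < n → f i ≤ a (i + m)) :
    ∑ i ∈ Finset.range n, f i ≤ ∑ i ∈ Finset.range n, a i + m * (hi - lo) := by
  obtain ⟨p, r, rfl, hpm, hr⟩ : ∃ p r, n = p + r ∧ p ≤ m ∧ (0 < r → p = m) :=
    ⟨min m n, n - min m n, by omega, by omega, by omega⟩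
  have h_shift : ∑ i ∈ Finset.range r, f i ≤ ∑ i ∈ Finset.range r, a (p + i) := by
    refine Finset.sum_le_sum fun i hi => ?_
    have hir := Finset.mem_range.1 hi
    rw [hr (by omega), add_comm m]
    exact hfa i (by have := hr (by omega); omega)
  have h_last : ∑ i ∈ Finset.range p, f (r + i) ≤ p * hi := by
    simpa using Finset.sum_le_card_nsmul (Finset.range p) (fun i => f (r + i)) hi fun i h =>
      hf _ (by have := Finset.mem_range.1 h; omega)
  have h_first : p * lo ≤ ∑ i ∈ Finset.range p, a i := by
    simpa using Finset.card_nsmul_le_sum (Finset.range p) a lo fun i h =>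
      ha _ (by have := Finset.mem_range.1 h; omega)
  have hpm' : (p : ℝ) * (hi - lo) ≤ m * (hi - lo) :=
    mul_le_mul_of_nonneg_right (by exact_mod_cast hpm) (sub_nonneg.2 hlohi)
  rw [Finset.sum_range_add a p r, add_comm p r, Finset.sum_range_add f r p]
  linarith

lemma mul_integral_le_integral_mul {g A : ℝ → ℝ} {a b c : ℝ} (hg : Continuous g)
    (hg0 : ∀ x, 0 ≤ g x) (hA : Continuous A) (hab : a ≤ b) (hc : ∀ t ∈ Set.Icc a b, c ≤ A t) :
    c * ∫ t in a..b, g t ≤ ∫ t in a..b, A t * g t := by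
  rw [← intervalIntegral.integral_const_mul]
  exact intervalIntegral.integral_mono_on hab ((hg.const_mul c).intervalIntegrable _ _)
    ((hA.mul hg).intervalIntegrable _ _) fun t ht => mul_le_mul_of_nonneg_right (hc t ht) (hg0 t)

lemma GG_sub {g : ℝ → ℝ} (hg : Continuous g) (x y : ℝ) : GG g y - GG g x = ∫ t in x..y, g t :=
  intervalIntegral.integral_interval_sub_left (hg.intervalIntegrable _ _)
    (hg.intervalIntegrable _ _)

lemma GG_strictMono {g : ℝ → ℝ} (hg : Continuous g) (hpos : ∀ x, 0 < g x) :
    StrictMono (GG g) := fun x y hxy => by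
  rw [← sub_pos, GG_sub hg]
  exact intervalIntegral.intervalIntegral_pos_of_pos_on (hg.intervalIntegrable x y)
    (fun t _ => hpos t) hxy

lemma GG_neg {g : ℝ → ℝ} (heven : ∀ x, g (-x) = g x) (x : ℝ) : GG g (-x) = -GG g x := by
  have h := intervalIntegral.integral_comp_neg (a := 0) (b := x) g
  simp only [heven, neg_zero] at h
  rw [GG, GG, h, intervalIntegral.integral_symm]

lemma continuous_GG {g : ℝ → ℝ} (hg : Continuous g) : Continuous (GG g) :=
  intervalIntegral.continuous_primitive (fun _ _ => hg.intervalIntegrable _ _) 0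

/-- `g` behaves like the density `ρ(·|q)` of `n` Bethe roots at inverse lattice spacing `N`: it is
continuous, positive and even, and has mass `n / N` on `[-q, q]`. -/
structure IsRootDensity (N n : ℕ) (q : ℝ) (g : ℝ → ℝ) : Prop where
  continuous : Continuous g
  pos : ∀ x, 0 < g x
  neg : ∀ x, g (-x) = g x
  nonneg : 0 ≤ q
  integral_eq : ∫ t in (-q)..q, g t = n / N

lemma Interlaced.neg_rev {N n k : ℕ} {g : ℝ → ℝ} {lam : Fin n → ℝ} (heven : ∀ x, g (-x) = g x)
    (hI : Interlaced N n k g lam) : Interlaced N n k g fun i => -lam i.rev := fun i => by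
  have hi : ((i.rev : ℕ) : ℝ) = n - (i + 1) := by
    rw [Fin.val_rev, Nat.cast_sub i.2]; push_cast; ring
  obtain ⟨h₁, h₂⟩ := hI i.rev
  rw [hi] at h₁ h₂
  rw [GG_neg heven]
  constructor
  · refine le_trans (le_of_eq ?_) (neg_le_neg h₂); ring
  · refine (neg_le_neg h₁).trans (le_of_eq ?_); ring

namespace IsRootDensity

variable {N n m k : ℕ} {q : ℝ} {g : ℝ → ℝ} {lam : Fin n → ℝ}

lemma GG_endpoint (h : IsRootDensity N n q g) : GG g q = n / 2 / N := by
  have hsub := GG_sub h.continuous (-q) q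
  rw [GG_neg h.neg, h.integral_eq] at hsub
  linear_combination hsub / 2

lemma GG_abs_le (h : IsRootDensity N n q g) (hI : Interlaced N n k g lam) (i : Fin n) :
    GG g |lam i| ≤ (n + k) / 2 / N := by
  have hi : ((i : ℕ) : ℝ) + 1 ≤ n := by exact_mod_cast i.2
  obtain ⟨h₁, h₂⟩ := hI i
  rcases abs_choice (lam i) with hl | hl <;> rw [hl]
  · exact h₂.trans (by gcongr; linarith)
  · rw [GG_neg h.neg]
    refine (neg_le_neg h₁).trans ?_
    rw [← neg_div]
    gcongr
    linarith [(i : ℕ).cast_nonneg (α := ℝ)]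

lemma exists_quantile (h : IsRootDensity N n q g) : ∃ y : ℕ → ℝ, y 0 = -q ∧ y n = q ∧
    (∀ j ≤ n, y j ∈ Set.Icc (-q) q ∧ GG g (y j) = (j - n / 2) / N) ∧
    ∀ j < n, y j ≤ y (j + 1) := by
  have hmono := GG_strictMono h.continuous h.pos
  have hy : ∀ j : ℕ, ∃ y, j ≤ n → y ∈ Set.Icc (-q) q ∧ GG g y = (j - n / 2) / N := fun j => by
    by_cases hj : j ≤ n
    swap
    · exact ⟨0, fun h => absurd h hj⟩
    have hjn : (j : ℝ) ≤ n := by exact_mod_cast hj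
    have hmem : ((j : ℝ) - n / 2) / N ∈ Set.Icc (GG g (-q)) (GG g q) := by
      rw [GG_neg h.neg, h.GG_endpoint, ← neg_div]
      exact ⟨by gcongr; linarith [j.cast_nonneg (α := ℝ)], by gcongr; linarith⟩
    obtain ⟨y, hy⟩ := intermediate_value_Icc (by linarith [h.nonneg])
      (continuous_GG h.continuous).continuousOn hmem
    exact ⟨y, fun _ => hy⟩
  choose y hy using hy
  refine ⟨y, hmono.injective ?_, hmono.injective ?_, hy, fun j hj => ?_⟩
  · rw [(hy 0 n.zero_le).2, GG_neg h.neg, h.GG_endpoint]; push_cast; ring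
  · rw [(hy n le_rfl).2, h.GG_endpoint]; ring
  · rw [← hmono.le_iff_le, (hy j hj.le).2, (hy (j + 1) hj).2]
    gcongr
    simp

lemma div_le_integral_mul (h : IsRootDensity N n q g) {A : ℝ → ℝ} (hA : Continuous A) {x y c : ℝ}
    (hxy : x ≤ y) (hmass : GG g y - GG g x = 1 / N) (hc : ∀ t ∈ Set.Icc x y, c ≤ A t) :
    c / N ≤ ∫ t in x..y, A t * g t := by
  refine le_of_eq_of_le ?_
    (mul_integral_le_integral_mul h.continuous (fun x => (h.pos x).le) hA hxy hc)
  rw [← GG_sub h.continuous, hmass, mul_one_div]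

theorem sum_le_of_monotone (h : IsRootDensity N n q g) (hN : 0 < N) (hk : k + 1 ≤ 2 * m)
    (hI : Interlaced N n k g lam) {A : ℝ → ℝ} (hA : Monotone A) (hAc : Continuous A) {lo hi : ℝ}
    (hlohi : lo ≤ hi) (hlo : ∀ t ∈ Set.Icc (-q) q, lo ≤ A t) (hhi : ∀ i, A (lam i) ≤ hi) :
    (1 / (N : ℝ)) * ∑ i, A (lam i) ≤ (∫ t in (-q)..q, A t * g t) + m * (hi - lo) / N := by
  have hN' : (0 : ℝ) < N := by exact_mod_cast hN
  have hk' : (k : ℝ) + 1 ≤ 2 * m := by exact_mod_cast hk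
  have hmono := GG_strictMono h.continuous h.pos
  -- The quantiles `y j` cut `[-q, q]` into `n` cells of mass `1 / N`, and interlacing places
  -- `lam i` to the left of cell `i + m`; the first `m` cells and last `m` roots stay unmatched.
  obtain ⟨y, hy0, hyn, hy, hstep⟩ := h.exists_quantile
  have hcell : ∀ j < n, ∀ c, (∀ t ∈ Set.Icc (y j) (y (j + 1)), c ≤ A t) →
      c / N ≤ ∫ t in y j..y (j + 1), A t * g t := fun j hj c hc => by
    refine h.div_le_integral_mul hAc (hstep j hj) ?_ hc
    rw [(hy j hj.le).2, (hy (j + 1) hj).2]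
    push_cast
    ring
  have hshift : ∀ i (hi : i < n), i + m < n → lam ⟨i, hi⟩ ≤ y (i + m) := fun i hi him => by
    rw [← hmono.le_iff_le, (hy (i + m) him.le).2]
    refine (hI ⟨i, hi⟩).2.trans (div_le_div_of_nonneg_right ?_ hN'.le)
    push_cast
    linarith
  have hsum := sum_range_le_sum_range_add_mul (n := n) (m := m)
    (f := fun i => if hi : i < n then A (lam ⟨i, hi⟩) / N else 0)
    (a := fun j => ∫ t in y j..y (j + 1), A t * g t) (div_le_div_of_nonneg_right hlohi hN'.le)
    (fun i hi => by simpa only [hi, dif_pos] using div_le_div_of_nonneg_right (hhi _) hN'.le)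
    (fun j hj => hcell j hj _ fun t ht =>
      hlo t ⟨(hy j hj.le).1.1.trans ht.1, ht.2.trans (hy (j + 1) hj).1.2⟩)
    (fun i him => by
      have hi : i < n := by omega
      simpa only [hi, dif_pos] using
        hcell _ him _ fun t ht => hA ((hshift i hi him).trans ht.1))
  have hcells : ∑ j ∈ Finset.range n, ∫ t in y j..y (j + 1), A t * g t =
      ∫ t in (-q)..q, A t * g t := by
    rw [← hy0, ← hyn]
    exact intervalIntegral.sum_integral_adjacent_intervals fun j _ =>
      (hAc.mul h.continuous).intervalIntegrable _ _
  rw [hcells, Finset.sum_range] at hsum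
  simp only [Fin.is_lt, dif_pos, Fin.eta, ← Finset.sum_div] at hsum
  rw [one_div_mul_eq_div, mul_div_assoc, sub_div]
  exact hsum

theorem sum_le_of_antitone (h : IsRootDensity N n q g) (hN : 0 < N) (hk : k + 1 ≤ 2 * m)
    (hI : Interlaced N n k g lam) {A : ℝ → ℝ} (hA : Antitone A) (hAc : Continuous A) {lo hi : ℝ}
    (hlohi : lo ≤ hi) (hlo : ∀ t ∈ Set.Icc (-q) q, lo ≤ A t) (hhi : ∀ i, A (lam i) ≤ hi) :
    (1 / (N : ℝ)) * ∑ i, A (lam i) ≤ (∫ t in (-q)..q, A t * g t) + m * (hi - lo) / N := by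
  have hrefl := h.sum_le_of_monotone hN hk (hI.neg_rev h.neg) (A := fun t => A (-t))
    (fun x y hxy => hA (neg_le_neg hxy)) (by fun_prop) hlohi
    (fun t ht => hlo _ ⟨neg_le_neg ht.2, by linarith [ht.1]⟩) fun i => by simpa using hhi i.rev
  have hint := intervalIntegral.integral_comp_neg (a := -q) (b := q) fun t => A t * g t
  simp only [h.neg, neg_neg] at hint hrefl
  rwa [hint, show ∑ i : Fin n, A (lam i.rev) = ∑ i, A (lam i) from
    Equiv.sum_comp Fin.revPerm fun i => A (lam i)] at hrefl

theorem sum_le_of_eq_add (h : IsRootDensity N n q g) (hN : 0 < N) (hk : k + 1 ≤ 2 * m)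
    (hI : Interlaced N n k g lam) {A A₁ A₂ : ℝ → ℝ} (hA : ∀ t, A t = A₁ t + A₂ t)
    (hA₁ : Monotone A₁) (hA₂ : Antitone A₂) (hAc₁ : Continuous A₁) (hAc₂ : Continuous A₂)
    {lo₁ hi₁ lo₂ hi₂ : ℝ} (hlohi₁ : lo₁ ≤ hi₁) (hlohi₂ : lo₂ ≤ hi₂)
    (hlo : ∀ t ∈ Set.Icc (-q) q, lo₁ ≤ A₁ t ∧ lo₂ ≤ A₂ t)
    (hhi : ∀ i, A₁ (lam i) ≤ hi₁ ∧ A₂ (lam i) ≤ hi₂) :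
    (1 / (N : ℝ)) * ∑ i, A (lam i) ≤
      (∫ t in (-q)..q, A t * g t) + m * ((hi₁ - lo₁) + (hi₂ - lo₂)) / N := by
  have h₁ := h.sum_le_of_monotone hN hk hI hA₁ hAc₁ hlohi₁ (fun t ht => (hlo t ht).1)
    fun i => (hhi i).1
  have h₂ := h.sum_le_of_antitone hN hk hI hA₂ hAc₂ hlohi₂ (fun t ht => (hlo t ht).2)
    fun i => (hhi i).2
  have hint : ∫ t in (-q)..q, A t * g t =
      (∫ t in (-q)..q, A₁ t * g t) + ∫ t in (-q)..q, A₂ t * g t := by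
    simp only [hA, add_mul]
    exact intervalIntegral.integral_add ((hAc₁.mul h.continuous).intervalIntegrable _ _)
      ((hAc₂.mul h.continuous).intervalIntegrable _ _)
  rw [hint]
  simp only [hA, Finset.sum_add_distrib]
  rw [mul_add, mul_add, add_div]
  linarith

variable {K : ℝ → ℝ}

theorem sum_kernel_le_of_unimodal (h : IsRootDensity N n q g) (hN : 0 < N) (hk : k + 1 ≤ 2 * m)
    (hI : Interlaced N n k g lam) (hK : Continuous K) (hK0 : ∀ x, 0 ≤ K x)
    (hKanti : ∀ x y, |x| ≤ |y| → K y ≤ K x) (x : ℝ) :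
    (1 / (N : ℝ)) * ∑ i, K (x - lam i) ≤
      (∫ t in (-q)..q, K (x - t) * g t) + m * (2 * K 0) / N := by
  have hKle : ∀ t, K t ≤ K 0 := fun t => hKanti 0 t (by simp)
  refine (h.sum_le_of_eq_add hN hk hI (A := fun t => K (x - t)) (A₁ := fun t => K (x - min t x))
    (A₂ := fun t => K (x - max t x) - K 0) (lo₁ := 0) (hi₁ := K 0) (lo₂ := -K 0) (hi₂ := 0)
    (fun t => ?_) (fun s t hst => hKanti _ _ ?_)
    (fun s t hst => sub_le_sub_right (hKanti _ _ ?_) _)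
    (by fun_prop) (by fun_prop) (hK0 0) (neg_nonpos.2 (hK0 0))
    (fun t _ => ⟨hK0 _, by linarith [hK0 (x - max t x)]⟩)
    fun i => ⟨hKle _, sub_nonpos.2 (hKle _)⟩).trans_eq (by ring)
  · rcases le_total t x with ht | ht <;> simp [ht]
  · have := min_le_min_right x hst
    rw [abs_of_nonneg (sub_nonneg.2 (min_le_right t x)),
      abs_of_nonneg (sub_nonneg.2 (min_le_right s x))]
    linarith
  · have := max_le_max_right x hst
    rw [abs_of_nonpos (sub_nonpos.2 (le_max_right s x)),
      abs_of_nonpos (sub_nonpos.2 (le_max_right t x))]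
    linarith

theorem sum_kernel_le_of_lipschitz (h : IsRootDensity N n q g) (hN : 0 < N)
    (hk : k + 1 ≤ 2 * m) (hI : Interlaced N n k g lam) {L : NNReal} (hK : LipschitzWith L K)
    (hK0 : ∀ x, 0 ≤ K x) {M b : ℝ} (hKM : ∀ x, K x ≤ M) (hqb : q ≤ b) (hb : ∀ i, |lam i| ≤ b)
    (x : ℝ) :
    (1 / (N : ℝ)) * ∑ i, K (x - lam i) ≤
      (∫ t in (-q)..q, K (x - t) * g t) + m * (M + 4 * L * b) / N := by
  have hKc := hK.continuous
  have hL : (0 : ℝ) ≤ L := L.2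
  have hLb : 0 ≤ L * b := mul_nonneg hL (h.nonneg.trans hqb)
  have hLt : ∀ t, |t| ≤ b → -(L * b) ≤ L * t ∧ L * t ≤ L * b := fun t ht => by
    rw [← mul_neg]
    exact ⟨mul_le_mul_of_nonneg_left (abs_le.1 ht).1 hL,
      mul_le_mul_of_nonneg_left (abs_le.1 ht).2 hL⟩
  refine (h.sum_le_of_eq_add hN hk hI (A := fun t => K (x - t)) (A₁ := fun t => K (x - t) + L * t)
    (A₂ := fun t => -(L * t)) (lo₁ := -(L * b)) (hi₁ := M + L * b) (lo₂ := -(L * b))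
    (hi₂ := L * b) (fun t => by ring) (fun s t hst => ?_)
    (fun s t hst => neg_le_neg (mul_le_mul_of_nonneg_left hst hL))
    (by fun_prop) (by fun_prop) (by linarith [(hK0 0).trans (hKM 0)]) (by linarith)
    (fun t ht => ?_) fun i => ?_).trans_eq (by ring)
  · have hdist := (le_abs_self _).trans (hK.dist_le_mul (x - s) (x - t))
    rw [Real.dist_eq, sub_sub_sub_cancel_left, abs_of_nonneg (sub_nonneg.2 hst)] at hdist
    simp only
    linarith
  · have := hLt t ((abs_le.2 ht).trans hqb)
    exact ⟨by linarith [hK0 (x - t)], by linarith⟩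
  · have := hLt _ (hb i)
    exact ⟨by linarith [hKM (x - lam i)], by linarith⟩

lemma abs_le_add (h : IsRootDensity N n q g) (hN : 0 < N) (hI : Interlaced N n k g lam) {c : ℝ}
    (hc : 0 < c) (hcg : ∀ x, c ≤ g x) (i : Fin n) : |lam i| ≤ q + k / (2 * c) := by
  have hN' : (1 : ℝ) ≤ N := by exact_mod_cast hN
  rcases le_total |lam i| q with hq | hq
  · exact hq.trans (le_add_of_nonneg_right (by positivity))
  have hmass : c * (|lam i| - q) ≤ k / 2 := calc
    c * (|lam i| - q) = ∫ _ in q..|lam i|, c := by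
      rw [intervalIntegral.integral_const, smul_eq_mul, mul_comm]
    _ ≤ ∫ t in q..|lam i|, g t :=
      intervalIntegral.integral_mono_on hq intervalIntegrable_const
        (h.continuous.intervalIntegrable _ _) fun t _ => hcg t
    _ = GG g |lam i| - GG g q := (GG_sub h.continuous _ _).symm
    _ ≤ (n + k) / 2 / N - n / 2 / N := by rw [h.GG_endpoint]; gcongr; exact h.GG_abs_le hI i
    _ = k / 2 / N := by ring
    _ ≤ k / 2 := div_le_self (by positivity) hN'
  rw [← sub_le_iff_le_add', ← div_div, le_div_iff₀' hc]
  exact hmass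

end IsRootDensity

/-! ### The Jacobian -/

section Jacobian

variable {xi K : ℝ → ℝ} {N n : ℕ} {lam : Fin n → ℝ}

theorem isUnit_Jac_of_sum_lt (hK : (Matrix.of fun i j => K (lam i - lam j)).PosSemidef)
    (hlt : ∀ i, (1 / (N : ℝ)) * ∑ l, K (lam i - lam l) < xi (lam i)) :
    IsUnit (Jac xi K N n lam) := by
  have hJ : Jac xi K N n lam =
      Matrix.diagonal (fun i => xi (lam i) - (1 / (N : ℝ)) * ∑ l, K (lam i - lam l)) +
        (1 / (N : ℝ)) • Matrix.of fun i j => K (lam i - lam j) := by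
    ext i j
    rcases eq_or_ne i j with rfl | hij
    · simp only [Jac, Matrix.of_apply, if_true, Matrix.add_apply, Matrix.diagonal_apply_eq,
        Matrix.smul_apply, smul_eq_mul,
        ← Finset.add_sum_erase _ (fun l => K (lam i - lam l)) (Finset.mem_univ i)]
      ring
    · simp [Jac, hij]
  rw [hJ]
  exact ((Matrix.PosDef.diagonal fun i => sub_pos.2 (hlt i)).add_posSemidef
    (hK.smul (by positivity))).isUnit

theorem isUnit_Jac_of_nonpos (hK : ∀ x, K x ≤ 0) (hxi : ∀ x, 0 < xi x) :
    IsUnit (Jac xi K N n lam) := by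
  rw [Matrix.isUnit_iff_isUnit_det, isUnit_iff_ne_zero]
  refine det_ne_zero_of_sum_row_lt_diag fun i => ?_
  have hoff : ∑ j ∈ Finset.univ.erase i, ‖Jac xi K N n lam i j‖ =
      -((1 / (N : ℝ)) * ∑ j ∈ Finset.univ.erase i, K (lam i - lam j)) := by
    rw [Finset.mul_sum, ← Finset.sum_neg_distrib]
    refine Finset.sum_congr rfl fun j hj => ?_
    rw [Jac, Matrix.of_apply, if_neg (Finset.ne_of_mem_erase hj).symm,
      Real.norm_of_nonpos (mul_nonpos_of_nonneg_of_nonpos (by positivity) (hK _))]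
  rw [hoff, Jac, Matrix.of_apply, if_pos rfl]
  exact (lt_add_of_pos_left _ (hxi (lam i))).trans_le (le_abs_self _)

end Jacobian

/-! ### The regime `-1 < Δ < 1` -/

lemma sinhQuotKernel_le_of_abs_le {α β x y : ℝ} (hα : 0 < α) (hαβ : α < β) (h : |x| ≤ |y|) :
    sinhQuotKernel α β y ≤ sinhQuotKernel α β x := by
  have hβ : 0 < β := hα.trans hαβ
  have hsin := Real.sin_pos_of_mem_Ioo (pi_mul_div_mem_Ioo hα hαβ)
  have hcosh : Real.cosh (π * x / β) ≤ Real.cosh (π * y / β) := by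
    rw [Real.cosh_le_cosh, abs_div, abs_div, abs_mul, abs_mul]
    gcongr
  have := cosh_add_cos_pos hα hαβ x
  rw [sinhQuotKernel, sinhQuotKernel]
  gcongr

section MasslessRegime

variable {ζ q y : ℝ} {g : ℝ → ℝ} {N n k : ℕ} {lam : Fin n → ℝ}

lemma integrable_rhoInf (hζ : 0 < ζ) : Integrable (rhoInf ζ) := by
  rw [rhoInf_eq_sinhQuotKernel hζ]
  exact integrable_sinhQuotKernel (half_pos hζ) (half_lt_self hζ)

lemma integral_rhoInf (hζ : 0 < ζ) : ∫ x, rhoInf ζ x = 1 / 2 := by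
  rw [rhoInf_eq_sinhQuotKernel hζ, integral_sinhQuotKernel (half_pos hζ) (half_lt_self hζ)]
  field_simp

lemma rhoInf_abs (ζ x : ℝ) : rhoInf ζ |x| = rhoInf ζ x := by
  rw [rhoInf, rhoInf, ← Real.cosh_abs (π * x / ζ), ← Real.cosh_abs (π * |x| / ζ)]
  simp only [abs_div, abs_mul, abs_abs]

lemma rhoInf_le_exp_mul (hζ : 0 < ζ) (hy : 0 ≤ y) {t : ℝ} (ht : y ≤ t) :
    rhoInf ζ t ≤ 2 * rhoInf ζ y * Real.exp (π / ζ * y) * Real.exp (-(π / ζ) * t) := by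
  have hsplit : π * t / ζ = π * y / ζ + π / ζ * (t - y) := by ring
  have hsinh : 0 ≤ Real.sinh (π * y / ζ) * Real.sinh (π / ζ * (t - y)) :=
    mul_nonneg (Real.sinh_nonneg_iff.2 (by positivity))
      (Real.sinh_nonneg_iff.2 (mul_nonneg (by positivity) (sub_nonneg.2 ht)))
  have hexp : Real.exp (π / ζ * (t - y)) / 2 ≤ Real.cosh (π / ζ * (t - y)) := by
    rw [Real.cosh_eq]
    linarith [Real.exp_pos (-(π / ζ * (t - y)))]
  have hcosh : Real.cosh (π * y / ζ) * (Real.exp (π / ζ * (t - y)) / 2) ≤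
      Real.cosh (π * t / ζ) := by
    rw [hsplit, Real.cosh_add]
    linarith [mul_le_mul_of_nonneg_left hexp (Real.cosh_pos (π * y / ζ)).le]
  calc rhoInf ζ t
      ≤ 1 / (2 * ζ * (Real.cosh (π * y / ζ) * (Real.exp (π / ζ * (t - y)) / 2))) := by
        rw [rhoInf]; gcongr
    _ = 2 * rhoInf ζ y * Real.exp (π / ζ * y) * Real.exp (-(π / ζ) * t) := by
        rw [rhoInf, mul_assoc (2 * _), ← Real.exp_add,
          show π / ζ * y + -(π / ζ) * t = -(π / ζ * (t - y)) by ring, Real.exp_neg]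
        field_simp

lemma integral_Ioi_rhoInf_le (hζ : 0 < ζ) (hy : 0 ≤ y) :
    ∫ t in Set.Ioi y, rhoInf ζ t ≤ 2 * ζ / π * rhoInf ζ y := by
  have hc : -(π / ζ) < 0 := neg_neg_of_pos (by positivity)
  refine (setIntegral_mono_on (integrable_rhoInf hζ).integrableOn
    ((integrableOn_exp_mul_Ioi hc y).const_mul _) measurableSet_Ioi
    fun t ht => rhoInf_le_exp_mul hζ hy (le_of_lt ht)).trans_eq ?_
  rw [integral_const_mul, integral_exp_mul_Ioi hc, neg_mul, Real.exp_neg]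
  field_simp

lemma quarter_sub_GG_rhoInf_le (hζ : 0 < ζ) (hy : 0 ≤ y) :
    1 / 4 - GG (rhoInf ζ) y ≤ 2 * ζ / π * rhoInf ζ y := by
  have hi := integrable_rhoInf hζ
  have hhalf := integral_comp_abs (f := rhoInf ζ)
  simp only [rhoInf_abs, integral_rhoInf hζ] at hhalf
  have hsplit := intervalIntegral.integral_interval_add_Ioi (a := 0) (b := y) hi.integrableOn
    (hi.integrableOn (s := Set.Ioi y))
  rw [GG]
  linarith [integral_Ioi_rhoInf_le hζ hy]

lemma Kml_zero_le (hζ : 0 < ζ) (hζ' : ζ < π / 2) : Kml ζ 0 ≤ 1 / (π * ζ) := by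
  have hsin : 0 < Real.sin ζ := Real.sin_pos_of_pos_of_lt_pi hζ (by linarith)
  have htan : ζ * Real.cos ζ ≤ Real.sin ζ := by
    rw [← Real.tan_mul_cos (Real.cos_pos_of_mem_Ioo ⟨by linarith, hζ'⟩).ne']
    exact mul_le_mul_of_nonneg_right (Real.lt_tan hζ hζ').le
      (Real.cos_pos_of_mem_Ioo ⟨by linarith, hζ'⟩).le
  calc Kml ζ 0 = Real.cos ζ / (π * Real.sin ζ) := by
        rw [Kml, Real.sin_two_mul, Real.sinh_zero]
        field_simp
        ring
    _ ≤ 1 / (π * ζ) := by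
        rw [div_le_div_iff₀ (by positivity) (by positivity)]
        linarith [mul_le_mul_of_nonneg_left htan Real.pi_pos.le]

lemma Kml_nonpos (hζ : π / 2 ≤ ζ) (hζ' : ζ < π) (x : ℝ) : Kml ζ x ≤ 0 := by
  have hsin := Real.sin_nonneg_of_nonneg_of_le_pi (x := 2 * ζ - π) (by linarith) (by linarith)
  rw [Real.sin_sub_pi] at hsin
  exact div_nonpos_of_nonpos_of_nonneg (by linarith) (by positivity)

lemma xiMl_pos (hζ : 0 < ζ) (hζ' : ζ < π) (x : ℝ) : 0 < xiMl ζ x := by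
  have := Real.sin_pos_of_pos_of_lt_pi hζ hζ'
  have := Real.sin_pos_of_pos_of_lt_pi (half_pos hζ) (by linarith)
  rw [xiMl]
  positivity

lemma IsBEml.isRootDensity (hζ : 0 < ζ) (hζ' : ζ < π / 2) (hq : 0 ≤ q) (h : IsBEml ζ q g)
    (hg : ∀ x, 0 < g x) (hint : ∫ t in (-q)..q, g t = n / N) : IsRootDensity N n q g :=
  ⟨h.continuous hζ hζ' hq, hg, h.neg hζ hζ' hq, hq, hint⟩

/-- The defect of `n` from half filling is what keeps `g` away from `0` at the roots: the mass of
`rhoInf` beyond `lam i` is at least of order `k² / N`, and `rhoInf` is comparable with its tails. -/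
lemma IsBEml.lt_density (hζ : 0 < ζ) (hζ' : ζ < π / 2) (hq : 0 ≤ q) (h : IsBEml ζ q g)
    (hg : ∀ x, 0 < g x) (hint : ∫ t in (-q)..q, g t = n / N) (hk : 0 < k) (hN : 0 < N)
    (hn : (n : ℝ) ≤ N / 2 - 8 * (k : ℝ) ^ 2) (hI : Interlaced N n k g lam) (i : Fin n) :
    (k + 2) * (1 / (π * ζ)) / N < g (lam i) := by
  have : (0 : ℝ) < N := by exact_mod_cast hN
  have hk' : (1 : ℝ) ≤ k := by exact_mod_cast hk
  have hrho : GG (rhoInf ζ) |lam i| ≤ GG g |lam i| :=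
    intervalIntegral.integral_mono_on (abs_nonneg _) (integrable_rhoInf hζ).intervalIntegrable
      ((h.continuous hζ hζ' hq).intervalIntegrable _ _) fun t _ => h.rhoInf_le hζ hζ' hq hg t
  have hfill : (n + k : ℝ) / 2 / N ≤ 1 / 4 - (8 * k ^ 2 - k) / (2 * N) := by
    rw [div_div, le_sub_iff_add_le, ← add_div, div_le_iff₀ (by positivity)]
    linarith
  have htail : (8 * k ^ 2 - k : ℝ) / (2 * N) ≤ 2 * ζ / π * rhoInf ζ (lam i) := by
    rw [← rhoInf_abs]
    linarith [quarter_sub_GG_rhoInf_le hζ (abs_nonneg (lam i)),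
      (h.isRootDensity hζ hζ' hq hg hint).GG_abs_le hI i]
  refine lt_of_lt_of_le ?_ (h.rhoInf_le hζ hζ' hq hg (lam i))
  have hpi : 9 ≤ π ^ 2 := by nlinarith [Real.pi_gt_three]
  have hnum : 4 * (k + 2) < π ^ 2 * (8 * k ^ 2 - k) := calc
    (4 * (k + 2) : ℝ) < 9 * (7 * k) := by linarith
    _ ≤ π ^ 2 * (8 * k ^ 2 - k) := by gcongr; nlinarith
  rw [← div_le_iff₀' (by positivity)] at htail
  refine lt_of_lt_of_le ?_ htail
  rw [show (k + 2) * (1 / (π * ζ)) / N = 4 * (k + 2) / (4 * π * ζ * N) by field_simp,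
    show (8 * k ^ 2 - k : ℝ) / (2 * N) / (2 * ζ / π) =
      π ^ 2 * (8 * k ^ 2 - k) / (4 * π * ζ * N) by field_simp; ring]
  gcongr

theorem IsBEml.isUnit_Jac (hζ : 0 < ζ) (hζ' : ζ < π / 2) (hq : 0 ≤ q) (h : IsBEml ζ q g)
    (hg : ∀ x, 0 < g x) (hint : ∫ t in (-q)..q, g t = n / N) (hk : 0 < k)
    (hn : (n : ℝ) ≤ N / 2 - 8 * (k : ℝ) ^ 2) (hI : Interlaced N n k g lam) :
    IsUnit (Jac (xiMl ζ) (Kml ζ) N n lam) := by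
  have D := isBetheKernel_Kml hζ hζ' hq
  have hN : 0 < N := by
    have hk' : (1 : ℝ) ≤ k := by exact_mod_cast hk
    have : (0 : ℝ) < N := by nlinarith [n.cast_nonneg (α := ℝ)]
    exact_mod_cast this
  refine isUnit_Jac_of_sum_lt (D.posSemidef lam) fun i => ?_
  have hsum := (h.isRootDensity hζ hζ' hq hg hint).sum_kernel_le_of_unimodal (m := k / 2 + 1) hN
    (by omega) hI D.continuous (fun x => (D.pos x).le)
    (fun x y hxy => by
      rw [Kml_eq_sinhQuotKernel]
      exact sinhQuotKernel_le_of_abs_le (by linarith) (by linarith) hxy) (lam i)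
  have herr : ((k / 2 + 1 : ℕ) : ℝ) * (2 * Kml ζ 0) / N ≤ (k + 2) * (1 / (π * ζ)) / N := by
    have hm : 2 * ((k / 2 + 1 : ℕ) : ℝ) ≤ k + 2 := by
      exact_mod_cast (by omega : 2 * (k / 2 + 1) ≤ k + 2)
    rw [← mul_assoc, mul_comm _ (2 : ℝ)]
    gcongr
    · exact (D.pos 0).le
    · exact Kml_zero_le hζ hζ'
  linarith [h.2.2 (lam i), h.lt_density hζ hζ' hq hg hint hk hN hn hI i]

theorem QDomainMl.isUnit_Jac {S : Set ℝ} (hζ : 0 < ζ) (hζ' : ζ < π) (h : QDomainMl ζ S g)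
    (hg : ∀ x, 0 < g x) (hint : ∫ t in S, g t = n / N) (hk : 0 < k)
    (hn : (n : ℝ) ≤ N / 2 -
      if -1 < -Real.cos ζ ∧ -Real.cos ζ < 0 then 8 * (k : ℝ) ^ 2 else 0)
    (hI : Interlaced N n k g lam) : IsUnit (Jac (xiMl ζ) (Kml ζ) N n lam) := by
  rcases le_or_gt (π / 2) ζ with hζ₂ | hζ₂
  · exact isUnit_Jac_of_nonpos (Kml_nonpos hζ₂ hζ') (xiMl_pos hζ hζ')
  have hcos : 0 < Real.cos ζ := Real.cos_pos_of_mem_Ioo ⟨by linarith, hζ₂⟩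
  have hcos' : Real.cos ζ < 1 := by
    simpa using Real.cos_lt_cos_of_nonneg_of_le_pi le_rfl hζ'.le hζ
  rw [if_pos ⟨neg_lt_neg hcos', neg_neg_of_pos hcos⟩] at hn
  rcases h with ⟨q, hq, rfl, hB⟩ | ⟨rfl, rfl⟩
  · rw [integral_Icc_eq_integral_Ioc, ← intervalIntegral.integral_of_le (by linarith)] at hint
    exact hB.isUnit_Jac hζ hζ₂ hq hg hint hk hn hI
  · -- At `q = ∞` the density has mass `1 / 2`, whereas `n / N < 1 / 2`.
    rw [Measure.restrict_univ, integral_rhoInf hζ] at hint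
    have hk' : (0 : ℝ) < k := by exact_mod_cast hk
    have hN : (N : ℝ) ≠ 0 := fun h0 => by simp [h0] at hint
    rw [div_eq_div_iff two_ne_zero hN] at hint
    nlinarith

end MasslessRegime

/-! ### The regime `Δ < -1` -/

lemma xiMs_le_xiMs_zero {ζ : ℝ} (hζ : 0 < ζ) (x : ℝ) : xiMs ζ x ≤ xiMs ζ 0 := by
  have := Real.sinh_pos_iff.2 hζ
  have := Real.sinh_pos_iff.2 (half_pos hζ)
  rw [xiMs, xiMs, Real.sin_zero, zero_pow two_ne_zero]
  gcongr
  positivity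

lemma exists_lipschitzWith_xiMs {ζ : ℝ} (hζ : 0 < ζ) : ∃ L, LipschitzWith L (xiMs ζ) := by
  have := Real.sinh_pos_iff.2 hζ
  have := Real.sinh_pos_iff.2 (half_pos hζ)
  set a := Real.sinh (ζ / 2) ^ 2 with ha
  have ha0 : 0 < a := by positivity
  refine ⟨_, LipschitzWith.of_dist_le' (K := Real.sinh ζ / (2 * π) * (2 / (a * a))) fun x y => ?_⟩
  have hnum : |Real.sin y ^ 2 - Real.sin x ^ 2| ≤ 2 * |x - y| := by
    rw [sq_sub_sq, abs_mul, abs_sub_comm x]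
    refine mul_le_mul ((abs_add_le _ _).trans ?_) ?_ (abs_nonneg _) zero_le_two
    · linarith [Real.abs_sin_le_one y, Real.abs_sin_le_one x]
    · simpa [Real.dist_eq] using Real.lipschitzWith_sin.dist_le_mul y x
  have hdiff : xiMs ζ x - xiMs ζ y = Real.sinh ζ / (2 * π) *
      ((Real.sin y ^ 2 - Real.sin x ^ 2) / ((Real.sin x ^ 2 + a) * (Real.sin y ^ 2 + a))) := by
    rw [xiMs, xiMs, ← ha]
    field_simp
    ring
  rw [Real.dist_eq, Real.dist_eq, hdiff, abs_mul, abs_of_pos (by positivity),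
    mul_assoc (Real.sinh ζ / (2 * π)), abs_div, abs_of_pos (a := _ * _) (by positivity),
    div_mul_eq_mul_div 2]
  gcongr <;> exact le_add_of_nonneg_left (sq_nonneg _)

section MassiveRegime

variable {ζ q : ℝ} {g : ℝ → ℝ} {N n : ℕ}

lemma IsBEms.isRootDensity (hζ : 0 < ζ) (hq : 0 ≤ q) (hq' : q ≤ π / 2) (h : IsBEms ζ q g)
    (hg : ∀ x, 0 < g x) (hint : ∫ t in (-q)..q, g t = n / N) : IsRootDensity N n q g :=
  ⟨h.1, hg, h.neg hζ hq hq', hq, hint⟩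

theorem exists_isUnit_Jac_of_isBEms (hζ : 0 < ζ) (k : ℕ) :
    ∃ N0 : ℕ, ∀ N n : ℕ, N0 ≤ N → ∀ (q : ℝ) (g : ℝ → ℝ), 0 ≤ q → q ≤ π / 2 → IsBEms ζ q g →
      (∀ x, 0 < g x) → ∫ t in (-q)..q, g t = n / N →
        ∀ lam : Fin n → ℝ, Interlaced N n k g lam → IsUnit (Jac (xiMs ζ) (Kms ζ) N n lam) := by
  have hζ₂ : 0 < 2 * ζ := by positivity
  obtain ⟨L, hL⟩ := exists_lipschitzWith_xiMs hζ₂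
  obtain ⟨c, hc, hcρ⟩ := exists_pos_le_rhoMs hζ
  set b := π / 2 + k / (2 * c) with hb
  obtain ⟨N1, hN1⟩ := exists_nat_gt (((k + 1 : ℕ) : ℝ) * (xiMs (2 * ζ) 0 + 4 * L * b) / c)
  refine ⟨N1 + 1, fun N n hN q g hq hq' h hg hint lam hI => ?_⟩
  have hN0 : 0 < N := by omega
  have hN' : (0 : ℝ) < N := by exact_mod_cast hN0
  have hN1N : (N1 : ℝ) ≤ N := by exact_mod_cast (by omega : N1 ≤ N)
  have hcg : ∀ x, c ≤ g x := fun x => (hcρ x).trans (h.rhoMs_le hζ hq hq' hg x)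
  have hG := h.isRootDensity hζ hq hq' hg hint
  have D := isBetheKernel_Kms hζ hq hq'
  rw [← Kms_eq_xiMs] at hL hN1
  refine isUnit_Jac_of_sum_lt (D.posSemidef lam) fun i => ?_
  have hsum := hG.sum_kernel_le_of_lipschitz (m := k + 1) (b := b) hN0 (by omega) hI hL
    (fun x => (D.pos x).le)
    (fun x => by rw [Kms_eq_xiMs]; exact xiMs_le_xiMs_zero hζ₂ x)
    (hq'.trans (le_add_of_nonneg_right (by positivity)))
    (fun j => (hG.abs_le_add hN0 hI hc hcg j).trans (by rw [hb]; gcongr)) (lam i)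
  rw [← Kms_eq_xiMs] at hsum
  have herr := (div_lt_comm₀ hc hN').1 (hN1.trans_le hN1N)
  linarith [h.2 (lam i), hcg (lam i)]

end MassiveRegime

theorem bethe_jacobian_invertible_general :
    ∃ C : ℝ, 0 < C ∧
      (∀ ζ : ℝ, 0 < ζ → ζ < π → ∀ k : ℕ, 0 < k → ∀ N n : ℕ,
        (n : ℝ) ≤ (N : ℝ) / 2 -
          (if -1 < -Real.cos ζ ∧ -Real.cos ζ < 0 then C * (k : ℝ) ^ 2 else 0) →
        ∀ (S : Set ℝ) (g : ℝ → ℝ), QDomainMl ζ S g → (∀ x : ℝ, 0 < g x) →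
          (∫ t in S, g t) = (n : ℝ) / N →
          ∀ lam : Fin n → ℝ, Interlaced N n k g lam →
            IsUnit (Jac (xiMl ζ) (Kml ζ) N n lam)) ∧
      ∀ ζ : ℝ, 0 < ζ → ∀ k : ℕ, ∃ N0 : ℕ, ∀ N n : ℕ, N0 ≤ N →
        ∀ (q : ℝ) (g : ℝ → ℝ), 0 ≤ q → q ≤ π / 2 → IsBEms ζ q g →
          (∀ x : ℝ, 0 < g x) → (∫ t in (-q)..q, g t) = (n : ℝ) / N →
          ∀ lam : Fin n → ℝ, Interlaced N n k g lam →
            IsUnit (Jac (xiMs ζ) (Kms ζ) N n lam) :=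
  ⟨8, by norm_num, fun _ hζ hζ' _ hk _ _ hn _ _ h hg hint _ hI =>
    h.isUnit_Jac hζ hζ' hg hint hk hn hI, fun _ hζ k => exists_isUnit_Jac_of_isBEms hζ k⟩

/-- **Invertibility of the Bethe Jacobian at interlaced vectors**
(Proposition 3.1): there is an absolute constant `C > 0` such that, in each regime,
for the smallest odd `k` exceeding the relevant threshold, for all `N` large enough,
all `n ≤ N/2 - Ck²·𝟙_{-1<Δ<0}` (resp. `n ≤ N/2`), every `𝔮` with
`∫_{-𝔮}^{𝔮} ρ(λ|𝔮)dλ = n/N` and every `(k,𝔮)`-interlaced, strictly ordered,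
symmetric `λ`, the Jacobian is invertible. -/
theorem bethe_jacobian_invertible :
    ∃ C : ℝ, 0 < C ∧
      -- regime `-1 < Δ < 1`, `Δ = -cos ζ`
      ((∀ ζ : ℝ, 0 < ζ → ζ < π →
        ∀ k : ℕ, Odd k → 0 < k →
          2 * π * k / ((k : ℝ) + 1) > |2 * π - 4 * ζ| →
          (∀ k' : ℕ, k' < k → Odd k' → 0 < k' →
            ¬(2 * π * k' / ((k' : ℝ) + 1) > |2 * π - 4 * ζ|)) →
          ∃ N0 : ℕ, ∀ N n : ℕ, Even N → N0 ≤ N →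
            (n : ℝ) ≤ (N : ℝ) / 2 -
              (if -1 < -Real.cos ζ ∧ -Real.cos ζ < 0 then C * (k : ℝ) ^ 2 else 0) →
            ∀ (S : Set ℝ) (g : ℝ → ℝ), QDomainMl ζ S g → (∀ x : ℝ, 0 < g x) →
              (∫ t in S, g t) = (n : ℝ) / N →
              ∀ lam : Fin n → ℝ, Interlaced N n k g lam → StrictOrderedVec lam →
                SymmetricVec lam →
                IsUnit (Jac (xiMl ζ) (Kml ζ) N n lam)) ∧
      -- regime `Δ < -1`, `Δ = -cosh ζ`
      (∀ ζ : ℝ, 0 < ζ →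
        ∀ s : ℝ, IsLUB (Set.range fun l : ℝ => |phiMs ζ l|) s →
        ∀ k : ℕ, Odd k → 0 < k →
          2 * π * k / ((k : ℝ) + 1) > s →
          (∀ k' : ℕ, k' < k → Odd k' → 0 < k' → ¬(2 * π * k' / ((k' : ℝ) + 1) > s)) →
          ∃ N0 : ℕ, ∀ N n : ℕ, Even N → N0 ≤ N → 2 * n ≤ N →
            ∀ (q : ℝ) (g : ℝ → ℝ), 0 ≤ q → q ≤ π / 2 → IsBEms ζ q g →
              (∀ x : ℝ, 0 < g x) → (∫ t in (-q)..q, g t) = (n : ℝ) / N →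
              ∀ lam : Fin n → ℝ, Interlaced N n k g lam → StrictOrderedVec lam →
                SymmetricVec lam →
                IsUnit (Jac (xiMs ζ) (Kms ζ) N n lam))) := by
  obtain ⟨C, hC, hml, hms⟩ := bethe_jacobian_invertible_general
  refine ⟨C, hC, fun ζ hζ hζ' k _ hk _ _ => ⟨0, fun N n _ _ hn S g h hg hint lam hI _ _ =>
    hml ζ hζ hζ' k hk N n hn S g h hg hint lam hI⟩, fun ζ hζ _ _ k _ _ _ _ => ?_⟩
  obtain ⟨N0, hN0⟩ := hms ζ hζ k
  exact ⟨N0, fun N n _ hN _ q g hq hq' h hg hint lam hI _ _ =>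
    hN0 N n hN q g hq hq' h hg hint lam hI⟩

end BetheSix
end
end

section
/- For every ζ ∈ (0,π) and every q ∈ [0,∞), the linear integral equation g(λ) + ∫_{−q}^{q} K(λ−μ)g(μ)dμ = ξ(λ) for all λ ∈ ℝ, with K(x) := sin(2ζ)/(2π(sinh²(x)+sin²(ζ))) and ξ(x) := sin(ζ)/(2π(sinh²(x)+sin²(ζ/2))), has a unique solution g = ρ(·|q) in L¹(ℝ)∩L^∞(ℝ). Moreover, for every m ∈ [0,1/2) there exists q ∈ [0,∞) with ∫_{−q}^{q} ρ(λ|q)dλ = m. -/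
open MeasureTheory Filter
open scoped Real BigOperators

noncomputable section

namespace BetheSix

/-!
Since `‖K‖₁ = |1 - 2ζ/π| < 1`, Young's inequality makes `f ↦ ξ - (1_S f) ⋆ K` a contraction of
`L¹`, whatever the truncation set `S`; a solution is bounded because `K` and `ξ` are. For two
truncation sets `S` and `T`, the solutions `g` and `f` satisfy
`‖1_S g - 1_T f‖₁ ≤ (1 - ‖K‖₁)⁻¹ ‖(1_S - 1_T) f‖₁`, which makes the mass `∫_{-q}^q ρ(λ|q) dλ`
continuous in `q ∈ [0, ∞]`. It vanishes at `q = 0`, and integrating the equation at `q = ∞` shows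
that it equals `∫ξ / (1 + ∫K) = (1 - ζ/π) / (2 - 2ζ/π) = 1/2` there, so the intermediate value
theorem gives every value in `[0, 1/2)`. Both integrals come from the primitive
`arctan (cot a * tanh x) / π` of `Kml a`, because `xiMl ζ = Kml (ζ / 2)`.
-/

open Metric Set ContinuousLinearMap
open scoped Convolution Topology ENNReal

lemma norm_indicator_sub_indicator_le {α E : Type*} [SeminormedAddCommGroup E] (S : Set α)
    (f g : α → E) (x : α) : ‖S.indicator f x - S.indicator g x‖ ≤ ‖f x - g x‖ := by
  rw [← Pi.sub_apply, ← indicator_sub']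
  exact norm_indicator_le_norm_self (f - g) x

lemma ae_eventually_mem_ball_iff {V : Type*} [NormedAddCommGroup V] [NormedSpace ℝ V]
    [FiniteDimensional ℝ V] [Nontrivial V] [MeasurableSpace V] [BorelSpace V] (μ : Measure V)
    [μ.IsAddHaarMeasure] (c : V) (r : ℝ) :
    ∀ᵐ x ∂μ, ∀ᶠ q in 𝓝 r, x ∈ ball c q ↔ x ∈ ball c r := by
  filter_upwards [measure_eq_zero_iff_ae_notMem.1 (Measure.addHaar_sphere μ c r)] with x hx
  rcases lt_or_gt_of_ne (mt mem_sphere.2 hx) with h | h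
  · filter_upwards [lt_mem_nhds h] with q hq using iff_of_true hq h
  · filter_upwards [gt_mem_nhds h] with q hq using iff_of_false hq.not_gt h.not_gt

section Convolution

variable {G E E' F : Type*} [AddGroup G] [MeasurableSpace G]
  [NormedAddCommGroup E] [NormedSpace ℝ E] [NormedAddCommGroup E'] [NormedSpace ℝ E']
  [NormedAddCommGroup F] [NormedSpace ℝ F] {μ : Measure G} {f : G → E} {g : G → E'}

lemma indicator_convolution_apply (L : E →L[ℝ] E' →L[ℝ] F) {S : Set G} (hS : MeasurableSet S)
    (x : G) : (S.indicator f ⋆[L, μ] g) x = ∫ t in S, L (f t) (g (x - t)) ∂μ := by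
  rw [convolution_def, ← integral_indicator hS]
  congr 1 with t
  by_cases ht : t ∈ S <;> simp [ht]

variable [MeasurableAdd₂ G] [MeasurableNeg G] [SFinite μ] [μ.IsAddRightInvariant]

lemma integral_norm_convolution_le (L : E →L[ℝ] E' →L[ℝ] F) (hf : Integrable f μ)
    (hg : Integrable g μ) :
    ∫ x, ‖(f ⋆[L, μ] g) x‖ ∂μ ≤ ‖L‖ * (∫ x, ‖g x‖ ∂μ) * ∫ x, ‖f x‖ ∂μ := by
  have hint := hf.norm.integrable_convolution (mul ℝ ℝ) hg.norm
  have hle : ∀ᵐ x ∂μ, ‖(f ⋆[L, μ] g) x‖ ≤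
      ‖L‖ * ((‖f ·‖) ⋆[mul ℝ ℝ, μ] (‖g ·‖)) x := by
    filter_upwards [hf.norm.ae_convolution_exists (mul ℝ ℝ) hg.norm] with x hx
    rw [convolution_def, convolution_def, ← integral_const_mul]
    refine norm_integral_le_of_norm_le (hx.const_mul ‖L‖) (.of_forall fun t => ?_)
    simpa only [mul_apply', mul_assoc] using L.le_opNorm₂ (f t) (g (x - t))
  calc ∫ x, ‖(f ⋆[L, μ] g) x‖ ∂μ
      ≤ ∫ x, ‖L‖ * ((‖f ·‖) ⋆[mul ℝ ℝ, μ] (‖g ·‖)) x ∂μ :=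
        integral_mono_ae (hf.integrable_convolution L hg).norm (hint.const_mul _) hle
    _ = ‖L‖ * (∫ x, ‖g x‖ ∂μ) * ∫ x, ‖f x‖ ∂μ := by
        rw [integral_const_mul, integral_convolution _ hf.norm hg.norm, mul_apply', mul_assoc,
          mul_comm (∫ x, ‖g x‖ ∂μ)]

lemma exists_forall_ae_norm_convolution_integrand_le (L : E →L[ℝ] E' →L[ℝ] F) (f : G → E)
    (hg : MemLp g ∞ μ) : ∃ C, ∀ x, ∀ᵐ t ∂μ, ‖L (f t) (g (x - t))‖ ≤ ‖L‖ * ‖f t‖ * C := by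
  obtain ⟨C, hC⟩ := eLpNormEssSup_lt_top_iff_isBoundedUnder.1 (eLpNorm_exponent_top (f := g) ▸ hg.2)
  refine ⟨C, fun x => ?_⟩
  filter_upwards [(quasiMeasurePreserving_sub_left_of_right_invariant μ x).ae hC] with t ht
  exact L.le_of_opNorm₂_le_of_le le_rfl le_rfl ht

lemma convolutionExists_of_memLp_top (L : E →L[ℝ] E' →L[ℝ] F) (hf : Integrable f μ)
    (hg : MemLp g ∞ μ) : ConvolutionExists f g L μ := by
  obtain ⟨C, hC⟩ := exists_forall_ae_norm_convolution_integrand_le L f hg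
  exact fun x => ((hf.norm.const_mul ‖L‖).mul_const C).mono'
    (hf.aestronglyMeasurable.convolution_integrand_snd L hg.aestronglyMeasurable x) (hC x)

lemma exists_forall_norm_convolution_le (L : E →L[ℝ] E' →L[ℝ] F) (hf : Integrable f μ)
    (hg : MemLp g ∞ μ) : ∃ C, ∀ x, ‖(f ⋆[L, μ] g) x‖ ≤ C := by
  obtain ⟨C, hC⟩ := exists_forall_ae_norm_convolution_integrand_le L f hg
  exact ⟨∫ t, ‖L‖ * ‖f t‖ * C ∂μ, fun x =>
    norm_integral_le_of_norm_le ((hf.norm.const_mul ‖L‖).mul_const C) (hC x)⟩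

lemma sub_convolution_of_memLp_top (L : E →L[ℝ] E' →L[ℝ] F) {f₁ f₂ : G → E}
    (hf₁ : Integrable f₁ μ) (hf₂ : Integrable f₂ μ) (hg : MemLp g ∞ μ) :
    (f₁ - f₂) ⋆[L, μ] g = f₁ ⋆[L, μ] g - f₂ ⋆[L, μ] g := by
  rw [eq_sub_iff_add_eq, ← (convolutionExists_of_memLp_top L (hf₁.sub hf₂) hg).add_distrib
    (convolutionExists_of_memLp_top L hf₂ hg), sub_add_cancel]

end Convolution

/-- The convolution equation `g + (1_S g) ⋆ K = ξ` with kernel `K` truncated to `S`, for an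
integrable unknown `g`. It holds at every point, and so pins down `g` itself and not only its
almost-everywhere class. -/
structure IsTruncatedSolution {G E F : Type*} [AddGroup G] [MeasurableSpace G]
    [NormedAddCommGroup E] [NormedSpace ℝ E] [NormedAddCommGroup F] [NormedSpace ℝ F]
    (L : E →L[ℝ] F →L[ℝ] E) (μ : Measure G) (K : G → F) (ξ : G → E) (S : Set G) (g : G → E) :
    Prop where
  integrable : Integrable g μ
  add_convolution : g + S.indicator g ⋆[L, μ] K = ξ

namespace IsTruncatedSolution

variable {G E F : Type*} [AddGroup G] [MeasurableSpace G] [MeasurableAdd₂ G] [MeasurableNeg G]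
  [NormedAddCommGroup E] [NormedSpace ℝ E] [NormedAddCommGroup F] [NormedSpace ℝ F]
  {L : E →L[ℝ] F →L[ℝ] E} {μ : Measure G} [SFinite μ] [μ.IsAddRightInvariant]
  {K : G → F} {ξ : G → E} {S T : Set G} {f g : G → E}

lemma memLp_top (hg : IsTruncatedSolution L μ K ξ S g) (hS : MeasurableSet S)
    (hK_int : Integrable K μ) (hK_top : MemLp K ∞ μ) (hξ : MemLp ξ ∞ μ) : MemLp g ∞ μ := by
  have hgS := hg.integrable.indicator hS
  obtain ⟨C, hC⟩ := exists_forall_norm_convolution_le L hgS hK_top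
  rw [eq_sub_of_add_eq hg.add_convolution]
  exact hξ.sub (memLp_top_of_bound (hgS.integrable_convolution L hK_int).aestronglyMeasurable C
    (.of_forall hC))

lemma sub_eq_convolution (hg : IsTruncatedSolution L μ K ξ S g)
    (hf : IsTruncatedSolution L μ K ξ T f) (hS : MeasurableSet S) (hT : MeasurableSet T)
    (hK_top : MemLp K ∞ μ) : f - g = (S.indicator g - T.indicator f) ⋆[L, μ] K := by
  rw [sub_convolution_of_memLp_top L (hg.integrable.indicator hS) (hf.integrable.indicator hT)
    hK_top, eq_sub_of_add_eq' hg.add_convolution, eq_sub_of_add_eq' hf.add_convolution,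
    sub_sub_sub_cancel_left]

lemma integral_norm_indicator_sub_le (hg : IsTruncatedSolution L μ K ξ S g)
    (hf : IsTruncatedSolution L μ K ξ T f) (hS : MeasurableSet S) (hT : MeasurableSet T)
    (hK_int : Integrable K μ) (hK_top : MemLp K ∞ μ) (hk : ‖L‖ * ∫ x, ‖K x‖ ∂μ < 1) :
    ∫ x, ‖S.indicator g x - T.indicator f x‖ ∂μ ≤
      (1 - ‖L‖ * ∫ x, ‖K x‖ ∂μ)⁻¹ * ∫ x, ‖S.indicator f x - T.indicator f x‖ ∂μ := by
  have hgf : Integrable (fun x => S.indicator g x - T.indicator f x) μ :=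
    (hg.integrable.indicator hS).sub (hf.integrable.indicator hT)
  have hff : Integrable (fun x => S.indicator f x - T.indicator f x) μ :=
    (hf.integrable.indicator hS).sub (hf.integrable.indicator hT)
  have hsub : Integrable (fun x => f x - g x) μ := hf.integrable.sub hg.integrable
  have hconv : ∫ x, ‖f x - g x‖ ∂μ ≤
      (‖L‖ * ∫ x, ‖K x‖ ∂μ) * ∫ x, ‖S.indicator g x - T.indicator f x‖ ∂μ := by
    have h := integral_norm_convolution_le L hgf hK_int
    rwa [← Pi.sub_def, ← hg.sub_eq_convolution hf hS hT hK_top] at h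
  have htri : ∫ x, ‖S.indicator g x - T.indicator f x‖ ∂μ ≤
      ∫ x, ‖S.indicator f x - T.indicator f x‖ ∂μ + ∫ x, ‖f x - g x‖ ∂μ := by
    rw [← integral_add hff.norm hsub.norm]
    refine integral_mono hgf.norm (hff.norm.add hsub.norm) fun x => ?_
    calc ‖S.indicator g x - T.indicator f x‖
        ≤ ‖S.indicator f x - T.indicator f x‖ + ‖S.indicator f x - S.indicator g x‖ := by
          rw [norm_sub_rev (S.indicator f x) (S.indicator g x), add_comm]
          exact norm_sub_le_norm_sub_add_norm_sub ..
      _ ≤ ‖S.indicator f x - T.indicator f x‖ + ‖f x - g x‖ := by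
          gcongr
          exact norm_indicator_sub_indicator_le ..
  rw [inv_mul_eq_div, le_div_iff₀ (by linarith)]
  linarith

lemma eq (hg : IsTruncatedSolution L μ K ξ S g) (hf : IsTruncatedSolution L μ K ξ S f)
    (hS : MeasurableSet S) (hK_int : Integrable K μ) (hK_top : MemLp K ∞ μ)
    (hk : ‖L‖ * ∫ x, ‖K x‖ ∂μ < 1) : g = f := by
  have hint : ∫ x, ‖S.indicator g x - S.indicator f x‖ ∂μ = 0 := by
    refine le_antisymm ?_ (integral_nonneg fun _ => norm_nonneg _)
    simpa using hg.integral_norm_indicator_sub_le hf hS hS hK_int hK_top hk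
  have hae : S.indicator g - S.indicator f =ᵐ[μ] 0 := by
    have hi := (hg.integrable.indicator hS).sub (hf.integrable.indicator hS)
    filter_upwards [(integral_eq_zero_iff_of_nonneg (fun _ => norm_nonneg _) hi.norm).1 hint]
      with x hx using norm_eq_zero.1 hx
  have hsub := hg.sub_eq_convolution hf hS hS hK_top
  rw [convolution_congr L hae .rfl, zero_convolution, sub_eq_zero] at hsub
  exact hsub.symm

variable (L) in
lemma exists_of_contracting [CompleteSpace E] (hS : MeasurableSet S)
    (hK_int : Integrable K μ) (hK_top : MemLp K ∞ μ) (hk : ‖L‖ * ∫ x, ‖K x‖ ∂μ < 1)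
    (hξ : Integrable ξ μ) : ∃ g, IsTruncatedSolution L μ K ξ S g := by
  have hS' (f : G →₁[μ] E) : Integrable (S.indicator f) μ := (L1.integrable_coeFn f).indicator hS
  have hint (f : G →₁[μ] E) : Integrable (ξ - S.indicator f ⋆[L, μ] K) μ :=
    hξ.sub ((hS' f).integrable_convolution L hK_int)
  let Φ (f : G →₁[μ] E) : G →₁[μ] E := (hint f).toL1
  have hΦ : ContractingWith ⟨‖L‖ * ∫ x, ‖K x‖ ∂μ, by positivity⟩ Φ := by
    refine ⟨by exact_mod_cast hk, .of_dist_le_mul fun f g => ?_⟩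
    rw [L1.dist_eq_integral_dist, L1.dist_eq_integral_dist]
    simp only [dist_eq_norm]
    calc ∫ x, ‖Φ f x - Φ g x‖ ∂μ
        = ∫ x, ‖((S.indicator g - S.indicator f) ⋆[L, μ] K) x‖ ∂μ := by
          refine integral_congr_ae ?_
          filter_upwards [(hint f).coeFn_toL1, (hint g).coeFn_toL1] with x hf hg
          rw [hf, hg, sub_convolution_of_memLp_top L (hS' g) (hS' f) hK_top]
          simp only [Pi.sub_apply, sub_sub_sub_cancel_left]
      _ ≤ (‖L‖ * ∫ x, ‖K x‖ ∂μ) * ∫ x, ‖(S.indicator g - S.indicator f) x‖ ∂μ :=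
          integral_norm_convolution_le L ((hS' g).sub (hS' f)) hK_int
      _ ≤ (‖L‖ * ∫ x, ‖K x‖ ∂μ) * ∫ x, ‖f x - g x‖ ∂μ := by
          refine mul_le_mul_of_nonneg_left (integral_mono ((hS' g).sub (hS' f)).norm
            ((L1.integrable_coeFn f).sub (L1.integrable_coeFn g)).norm fun x => ?_) (by positivity)
          rw [Pi.sub_apply, norm_sub_rev (f x)]
          exact norm_indicator_sub_indicator_le ..
  obtain ⟨f, hf, -⟩ := hΦ.exists_fixedPoint 0 (edist_ne_top _ _)
  have hae : ξ - S.indicator f ⋆[L, μ] K =ᵐ[μ] f := by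
    simpa only [Φ, hf.eq] using (hint f).coeFn_toL1.symm
  -- A fixed point in `L¹` solves the equation only almost everywhere, but its image under the
  -- right-hand side, evaluated pointwise, solves it everywhere.
  refine ⟨_, hint f, ?_⟩
  rw [convolution_congr L ((ae_eq_restrict_iff_indicator_ae_eq hS).1 (ae_restrict_of_ae hae)) .rfl,
    sub_add_cancel]

lemma integral_add_integral_indicator [CompleteSpace E] [CompleteSpace F]
    (hg : IsTruncatedSolution L μ K ξ S g) (hS : MeasurableSet S) (hK_int : Integrable K μ) :
    ∫ x, g x ∂μ + L (∫ x in S, g x ∂μ) (∫ x, K x ∂μ) = ∫ x, ξ x ∂μ := by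
  have hgS := hg.integrable.indicator hS
  rw [← hg.add_convolution, integral_add' hg.integrable (hgS.integrable_convolution L hK_int),
    integral_convolution L hgS hK_int, integral_indicator hS]

lemma tendsto_setIntegral {ι : Type*} {l : Filter ι} [l.IsCountablyGenerated] {S : ι → Set G}
    {g : ι → G → E} (hg : ∀ i, IsTruncatedSolution L μ K ξ (S i) (g i))
    (hf : IsTruncatedSolution L μ K ξ T f) (hS : ∀ i, MeasurableSet (S i))
    (hT : MeasurableSet T) (hK_int : Integrable K μ) (hK_top : MemLp K ∞ μ)
    (hk : ‖L‖ * ∫ x, ‖K x‖ ∂μ < 1) (hST : ∀ᵐ x ∂μ, ∀ᶠ i in l, x ∈ S i ↔ x ∈ T) :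
    Tendsto (fun i => ∫ x in S i, g i x ∂μ) l (𝓝 (∫ x in T, f x ∂μ)) := by
  have hff (i : ι) : Integrable (fun x => (S i).indicator f x - T.indicator f x) μ :=
    (hf.integrable.indicator (hS i)).sub (hf.integrable.indicator hT)
  have hzero : Tendsto (fun i => ∫ x, ‖(S i).indicator f x - T.indicator f x‖ ∂μ) l (𝓝 0) := by
    rw [← integral_zero G ℝ]
    refine tendsto_integral_filter_of_dominated_convergence (fun x => ‖f x‖)
      (.of_forall fun i => (hff i).norm.aestronglyMeasurable)
      (.of_forall fun i => .of_forall fun x => ?_) hf.integrable.norm ?_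
    · by_cases hxS : x ∈ S i <;> by_cases hxT : x ∈ T <;> simp [hxS, hxT]
    · filter_upwards [hST] with x hx
      refine tendsto_const_nhds.congr' ?_
      filter_upwards [hx] with i hi
      rw [indicator_eq_indicator hi rfl, sub_self, norm_zero]
  rw [tendsto_iff_norm_sub_tendsto_zero]
  refine squeeze_zero (fun _ => norm_nonneg _) (fun i => ?_)
    (by simpa only [mul_zero] using hzero.const_mul (1 - ‖L‖ * ∫ x, ‖K x‖ ∂μ)⁻¹)
  rw [← integral_indicator (hS i), ← integral_indicator hT, ← integral_sub
    ((hg i).integrable.indicator (hS i)) (hf.integrable.indicator hT)]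
  exact (norm_integral_le_integral_norm _).trans
    ((hg i).integral_norm_indicator_sub_le hf (hS i) hT hK_int hK_top hk)

lemma tendsto_setIntegral_ball_atTop {V : Type*} [NormedAddCommGroup V] [MeasurableSpace V]
    [BorelSpace V] [SecondCountableTopology V] {μ : Measure V} [SFinite μ] [μ.IsAddRightInvariant]
    {K : V → F} {ξ : V → E} {g : ℝ → V → E} {f : V → E}
    (hg : ∀ q, IsTruncatedSolution L μ K ξ (ball 0 q) (g q))
    (hf : IsTruncatedSolution L μ K ξ univ f) (hK_int : Integrable K μ)
    (hK_top : MemLp K ∞ μ) (hk : ‖L‖ * ∫ x, ‖K x‖ ∂μ < 1) :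
    Tendsto (fun q => ∫ x in ball 0 q, g q x ∂μ) atTop (𝓝 (∫ x, f x ∂μ)) := by
  rw [← setIntegral_univ]
  refine tendsto_setIntegral hg hf (fun _ => measurableSet_ball) .univ hK_int hK_top hk
    (.of_forall fun x => ?_)
  filter_upwards [eventually_gt_atTop ‖x‖] with q hq
  exact iff_of_true (mem_ball_zero_iff.2 hq) (mem_univ x)

section Ball

variable {V E F : Type*} [NormedAddCommGroup V] [NormedSpace ℝ V] [FiniteDimensional ℝ V]
  [Nontrivial V] [MeasurableSpace V] [BorelSpace V] {μ : Measure V} [μ.IsAddHaarMeasure]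
  [NormedAddCommGroup E] [NormedSpace ℝ E] [NormedAddCommGroup F] [NormedSpace ℝ F]
  {L : E →L[ℝ] F →L[ℝ] E}

lemma continuous_setIntegral_ball {K : V → F} {ξ : V → E} {g : ℝ → V → E}
    (hg : ∀ q, IsTruncatedSolution L μ K ξ (ball 0 q) (g q)) (hK_int : Integrable K μ)
    (hK_top : MemLp K ∞ μ) (hk : ‖L‖ * ∫ x, ‖K x‖ ∂μ < 1) :
    Continuous fun q => ∫ x in ball 0 q, g q x ∂μ :=
  continuous_iff_continuousAt.2 fun r =>
    tendsto_setIntegral hg (hg r) (fun _ => measurableSet_ball) measurableSet_ball hK_int hK_top hk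
      (ae_eventually_mem_ball_iff μ 0 r)

lemma exists_setIntegral_ball_eq {K ξ : V → ℝ} (hK_int : Integrable K μ) (hK_top : MemLp K ∞ μ)
    (hk : ∫ x, ‖K x‖ ∂μ < 1) (hξ : Integrable ξ μ) {m : ℝ} (hm : 0 ≤ m)
    (hm' : m < (∫ x, ξ x ∂μ) / (1 + ∫ x, K x ∂μ)) :
    ∃ q, 0 ≤ q ∧ ∀ g, IsTruncatedSolution (mul ℝ ℝ) μ K ξ (ball 0 q) g →
      ∫ x in ball 0 q, g x ∂μ = m := by
  have hk' : ‖mul ℝ ℝ‖ * ∫ x, ‖K x‖ ∂μ < 1 := by rwa [opNorm_mul, one_mul]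
  have hden_pos : 0 < 1 + ∫ x, K x ∂μ := by
    linarith [neg_abs_le (∫ x, K x ∂μ), norm_integral_le_integral_norm (μ := μ) K,
      Real.norm_eq_abs (∫ x, K x ∂μ)]
  have hex (q : ℝ) : ∃ g, IsTruncatedSolution (mul ℝ ℝ) μ K ξ (ball 0 q) g :=
    exists_of_contracting _ measurableSet_ball hK_int hK_top hk' hξ
  choose g hg using hex
  obtain ⟨f, hf⟩ := exists_of_contracting (mul ℝ ℝ) .univ hK_int hK_top hk' hξ
  have hf_int : ∫ x, f x ∂μ = (∫ x, ξ x ∂μ) / (1 + ∫ x, K x ∂μ) := by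
    have h := hf.integral_add_integral_indicator .univ hK_int
    rw [setIntegral_univ, mul_apply'] at h
    exact eq_div_of_mul_eq hden_pos.ne' (by rw [mul_one_add, h])
  obtain ⟨Q, hQm, hQ⟩ := ((tendsto_setIntegral_ball_atTop hg hf hK_int hK_top hk').eventually
    (lt_mem_nhds (hf_int ▸ hm'))).and (eventually_ge_atTop 0) |>.exists
  have hzero : ∫ x in ball 0 0, g 0 x ∂μ = 0 := by rw [ball_zero, setIntegral_empty]
  obtain ⟨q, ⟨hq, -⟩, hqm⟩ := intermediate_value_Icc hQ
    (continuous_setIntegral_ball hg hK_int hK_top hk').continuousOn ⟨hzero.trans_le hm, hQm.le⟩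
  refine ⟨q, hq, fun g' hg' => ?_⟩
  rw [hg'.eq (hg q) measurableSet_ball hK_int hK_top hk']
  exact hqm

end Ball

end IsTruncatedSolution

lemma hasDerivAt_tanh (x : ℝ) : HasDerivAt Real.tanh (1 / Real.cosh x ^ 2) x := by
  have h := (Real.hasDerivAt_sinh x).div (Real.hasDerivAt_cosh x) (Real.cosh_pos x).ne'
  rw [← sq, ← sq, Real.cosh_sq_sub_sinh_sq] at h
  exact h.congr_of_eventuallyEq (.of_forall Real.tanh_eq_sinh_div_cosh)

lemma monotone_tanh : Monotone Real.tanh :=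
  monotone_of_hasDerivAt_nonneg hasDerivAt_tanh fun _ => by positivity

lemma range_tanh : range Real.tanh = Ioo (-1) 1 := by
  rw [← image_univ, Real.tanh_bijOn.image_eq]

lemma tendsto_tanh_atTop : Tendsto Real.tanh atTop (𝓝 1) :=
  tendsto_atTop_isLUB monotone_tanh (range_tanh ▸ isLUB_Ioo (by norm_num))

lemma tendsto_tanh_atBot : Tendsto Real.tanh atBot (𝓝 (-1)) :=
  tendsto_atBot_isGLB monotone_tanh (range_tanh ▸ isGLB_Ioo (by norm_num))

lemma arctan_cot {a : ℝ} (h0 : 0 < a) (hπ : a < π) : Real.arctan (Real.cot a) = π / 2 - a := by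
  rw [Real.cot_eq_cos_div_sin, ← Real.sin_pi_div_two_sub a, ← Real.cos_pi_div_two_sub a,
    ← Real.tan_eq_sin_div_cos, Real.arctan_tan (by linarith) (by linarith)]

section Kernel

variable {a : ℝ}

lemma xiMl_eq_Kml (ζ : ℝ) : xiMl ζ = Kml (ζ / 2) := by
  ext x
  rw [xiMl, Kml, mul_div_cancel₀ ζ two_ne_zero]

lemma continuous_Kml (ha : Real.sin a ≠ 0) : Continuous (Kml a) :=
  Continuous.div (by fun_prop) (by fun_prop) fun _ => by positivity

lemma norm_Kml_le (ha : Real.sin a ≠ 0) (x : ℝ) :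
    ‖Kml a x‖ ≤ |Real.sin (2 * a)| / (2 * π * Real.sin a ^ 2) * (1 + x ^ 2)⁻¹ := by
  have hsinh : x ^ 2 ≤ Real.sinh x ^ 2 := by
    rw [sq_le_sq, Real.abs_sinh]
    exact Real.self_le_sinh_iff.2 (abs_nonneg x)
  have hden : Real.sin a ^ 2 * (1 + x ^ 2) ≤ Real.sinh x ^ 2 + Real.sin a ^ 2 := by
    linarith [mul_le_of_le_one_left (sq_nonneg x) (Real.sin_sq_le_one a)]
  rw [Kml, norm_div, Real.norm_eq_abs, Real.norm_of_nonneg (by positivity), ← div_eq_mul_inv,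
    div_div, mul_assoc (2 * π)]
  gcongr

lemma integrable_Kml (ha : Real.sin a ≠ 0) : Integrable (Kml a) :=
  (integrable_inv_one_add_sq.const_mul _).mono' (continuous_Kml ha).aestronglyMeasurable
    (.of_forall (norm_Kml_le ha))

lemma memLp_top_Kml (ha : Real.sin a ≠ 0) : MemLp (Kml a) ∞ :=
  memLp_top_of_bound (continuous_Kml ha).aestronglyMeasurable _ <| .of_forall fun x =>
    (norm_Kml_le ha x).trans <| mul_le_of_le_one_right (by positivity) <|
      inv_le_one_of_one_le₀ (le_add_of_nonneg_right (sq_nonneg x))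

lemma hasDerivAt_arctan_cot_mul_tanh (ha : Real.sin a ≠ 0) (x : ℝ) :
    HasDerivAt (fun y => Real.arctan (Real.cot a * Real.tanh y)) (π * Kml a x) x := by
  convert ((hasDerivAt_tanh x).const_mul (Real.cot a)).arctan using 1
  have hcosh : Real.cosh x ≠ 0 := (Real.cosh_pos x).ne'
  have hden : Real.sin a ^ 2 * Real.cosh x ^ 2 + Real.cos a ^ 2 * Real.sinh x ^ 2 =
      Real.sinh x ^ 2 + Real.sin a ^ 2 := by
    rw [Real.cosh_sq, Real.cos_sq']
    ring
  rw [Kml, ← hden, Real.sin_two_mul, Real.cot_eq_cos_div_sin, Real.tanh_eq_sinh_div_cosh]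
  field_simp

lemma integral_Kml (h0 : 0 < a) (hπ : a < π) : ∫ x, Kml a x = 1 - 2 * a / π := by
  have ha : Real.sin a ≠ 0 := (Real.sin_pos_of_pos_of_lt_pi h0 hπ).ne'
  have hlim {l : Filter ℝ} {t : ℝ} (ht : Tendsto Real.tanh l (𝓝 t)) :
      Tendsto (fun y => Real.arctan (Real.cot a * Real.tanh y)) l
        (𝓝 (Real.arctan (Real.cot a * t))) :=
    (Real.continuous_arctan.tendsto _).comp (ht.const_mul _)
  have hint := integral_of_hasDerivAt_of_tendsto (hasDerivAt_arctan_cot_mul_tanh ha)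
    ((integrable_Kml ha).const_mul π) (hlim tendsto_tanh_atBot) (hlim tendsto_tanh_atTop)
  rw [integral_const_mul, mul_neg_one, mul_one, Real.arctan_neg, arctan_cot h0 hπ] at hint
  field_simp
  linarith

lemma integral_norm_Kml (a : ℝ) : ∫ x, ‖Kml a x‖ = |∫ x, Kml a x| := by
  have hw (x : ℝ) : 0 ≤ (2 * π * (Real.sinh x ^ 2 + Real.sin a ^ 2))⁻¹ := by positivity
  have hint : 0 ≤ ∫ x, (2 * π * (Real.sinh x ^ 2 + Real.sin a ^ 2))⁻¹ := integral_nonneg hw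
  simp only [Kml, div_eq_mul_inv, norm_mul, Real.norm_of_nonneg (hw _), integral_const_mul,
    abs_mul, abs_of_nonneg hint, Real.norm_eq_abs]

lemma integral_norm_Kml_lt_one (h0 : 0 < a) (hπ : a < π) : ∫ x, ‖Kml a x‖ < 1 := by
  have hpos : 0 < 2 * a / π := by positivity
  have hlt : 2 * a / π < 2 := by
    rw [div_lt_iff₀ Real.pi_pos]
    linarith
  rw [integral_norm_Kml, integral_Kml h0 hπ, abs_lt]
  constructor <;> linarith

lemma integral_xiMl_div_one_add_integral_Kml {ζ : ℝ} (h0 : 0 < ζ) (hπ : ζ < π) :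
    (∫ x, xiMl ζ x) / (1 + ∫ x, Kml ζ x) = 1 / 2 := by
  have hpos : 0 < 1 - ζ / π := sub_pos.2 ((div_lt_one Real.pi_pos).2 hπ)
  have hden : 1 + (1 - 2 * ζ / π) = 2 * (1 - ζ / π) := by ring
  rw [xiMl_eq_Kml, integral_Kml (by linarith) (by linarith), integral_Kml h0 hπ, hden,
    mul_div_cancel₀ ζ two_ne_zero, div_mul_cancel_right₀ hpos.ne', one_div]

end Kernel

lemma intervalIntegral_neg_self_eq_setIntegral_ball {E : Type*} [NormedAddCommGroup E]
    [NormedSpace ℝ E] {q : ℝ} (hq : 0 ≤ q) (f : ℝ → E) :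
    ∫ x in (-q)..q, f x = ∫ x in ball 0 q, f x := by
  rw [intervalIntegral.integral_of_le (neg_le_self hq), integral_Ioc_eq_integral_Ioo,
    Real.ball_eq_Ioo, zero_sub, zero_add]

lemma isBEml_iff_isTruncatedSolution {ζ q : ℝ} {g : ℝ → ℝ} (h0 : 0 < ζ) (hπ : ζ < π)
    (hq : 0 ≤ q) :
    IsBEml ζ q g ↔ IsTruncatedSolution (mul ℝ ℝ) volume (Kml ζ) (xiMl ζ) (ball 0 q) g := by
  have heq : g + (ball 0 q).indicator g ⋆[mul ℝ ℝ, volume] Kml ζ = xiMl ζ ↔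
      ∀ l, g l + ∫ m in (-q)..q, Kml ζ (l - m) * g m = xiMl ζ l := by
    simp only [funext_iff, Pi.add_apply, indicator_convolution_apply _ measurableSet_ball,
      mul_apply', intervalIntegral_neg_self_eq_setIntegral_ball hq, mul_comm (g _)]
  have hζ : Real.sin ζ ≠ 0 := (Real.sin_pos_of_pos_of_lt_pi h0 hπ).ne'
  have hζ₂ : Real.sin (ζ / 2) ≠ 0 :=
    (Real.sin_pos_of_pos_of_lt_pi (by linarith) (by linarith)).ne'
  refine ⟨fun h => ⟨h.1, heq.2 h.2.2⟩, fun h => ⟨h.integrable, ?_, heq.1 h.add_convolution⟩⟩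
  exact h.memLp_top measurableSet_ball (integrable_Kml hζ) (memLp_top_Kml hζ)
    (xiMl_eq_Kml ζ ▸ memLp_top_Kml hζ₂)

/-- **Existence and uniqueness for the continuum Bethe equation, regime
`-1 < Δ < 1`** (Proposition B.1): for every `ζ ∈ (0,π)` and `q ∈ [0,∞)` the
equation `g(λ) + ∫_{-q}^q K(λ-μ)g(μ)dμ = ξ(λ)` has a unique solution
`g = ρ(·|q)` in `L¹(ℝ) ∩ L^∞(ℝ)`; moreover for every `m ∈ [0,1/2)` there is a
`q ∈ [0,∞)` with `∫_{-q}^{q} ρ(λ|q)dλ = m`. -/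
theorem continuum_bethe_massless (ζ : ℝ) (h0 : 0 < ζ) (hπ : ζ < π) :
    (∀ q : ℝ, 0 ≤ q → ∃! g : ℝ → ℝ, IsBEml ζ q g) ∧
    ∀ m : ℝ, 0 ≤ m → m < 1 / 2 →
      ∃ q : ℝ, 0 ≤ q ∧ ∀ g : ℝ → ℝ, IsBEml ζ q g → (∫ t in (-q)..q, g t) = m := by
  have hζ : Real.sin ζ ≠ 0 := (Real.sin_pos_of_pos_of_lt_pi h0 hπ).ne'
  have hζ₂ : Real.sin (ζ / 2) ≠ 0 :=
    (Real.sin_pos_of_pos_of_lt_pi (by linarith) (by linarith)).ne'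
  have hξ : Integrable (xiMl ζ) := xiMl_eq_Kml ζ ▸ integrable_Kml hζ₂
  have hk := integral_norm_Kml_lt_one h0 hπ
  have hk' : ‖mul ℝ ℝ‖ * ∫ x, ‖Kml ζ x‖ < 1 := by rwa [opNorm_mul, one_mul]
  refine ⟨fun q hq => ?_, fun m hm hm' => ?_⟩
  · simp only [isBEml_iff_isTruncatedSolution h0 hπ hq]
    obtain ⟨g, hg⟩ := IsTruncatedSolution.exists_of_contracting (mul ℝ ℝ) measurableSet_ball
      (integrable_Kml hζ) (memLp_top_Kml hζ) hk' hξ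
    exact ⟨g, hg, fun f hf =>
      hf.eq hg measurableSet_ball (integrable_Kml hζ) (memLp_top_Kml hζ) hk'⟩
  · obtain ⟨q, hq, hmass⟩ := IsTruncatedSolution.exists_setIntegral_ball_eq (integrable_Kml hζ)
      (memLp_top_Kml hζ) hk hξ hm
      (integral_xiMl_div_one_add_integral_Kml h0 hπ ▸ hm')
    refine ⟨q, hq, fun g hg => ?_⟩
    rw [intervalIntegral_neg_self_eq_setIntegral_ball hq]
    exact hmass g ((isBEml_iff_isTruncatedSolution h0 hπ hq).1 hg)

end BetheSix
end
end
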